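/- Let N = 1 and m > 1, and let u be a radial (even) very weak solution of Eq. (E) with even initial datum u₀ ∈ L^∞(ℝ) ∩ C(ℝ), u₀ ≥ 0, u₀ ≢ 0, satisfying u₀(0) = 0 and M₀ := ∫₀^∞ u₀(x)/x dx < ∞. Let k > 0 be the unique constant with ((m-1)/m) m^{-1/(m-1)} k^{m/(m-1)} = M₀, and define F(x,t) = t^{-1/m} [ (1/m) t^{-1/m} log|x| ]₊^{1/(m-1)} for 0 < |x| < e^{k t^{1/m}}, and F(x,t) = 0 for |x| ≥ e^{k t^{1/m}}. Then for every p ∈ [1,∞): lim_{t→∞} t^{(p-1)/(mp)} ( ∫_ℝ |u(x,t) − F(x,t)|^p / |x| dx )^{1/p} = 0. -/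

import Mathlib

open Real MeasureTheory Set Filter Topology

noncomputable section

/-- `v` (in radial variables: `v r t`, `r = |x|`) is a radial very weak solution of the
nonhomogeneous porous medium equation `|x|^{-2} ∂ₜ u = Δ(u^m)` in dimension `N`,
with initial datum `v₀`: `v` is nonnegative, continuous on `ℝ^N × (0,∞)`, bounded on
`ℝ^N × [0,T]` for every `T`, and satisfies the very weak (integral) formulation against
every nonnegative test function `φ ∈ C^{2,1}` vanishing on the lateral boundary. -/
def IsRadialVeryWeakSolution (N : ℕ) (m : ℝ) (v : ℝ → ℝ → ℝ) (v₀ : ℝ → ℝ) : Prop :=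
  (∀ r t, 0 ≤ v r t) ∧
  ContinuousOn (fun p : ℝ × ℝ => v p.1 p.2) (Set.Ici 0 ×ˢ Set.Ioi 0) ∧
  (∀ T : ℝ, 0 < T → ∃ C : ℝ, ∀ r ∈ Set.Ici (0 : ℝ), ∀ t ∈ Set.Icc (0 : ℝ) T, v r t ≤ C) ∧
  ∀ (r₁ r₂ T : ℝ) (φ φt φr φrr : ℝ → ℝ → ℝ),
    0 < r₁ → r₁ < r₂ → 0 < T →
    (∀ r t, 0 ≤ φ r t) →
    (∀ r t, HasDerivAt (fun τ => φ r τ) (φt r t) t) →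
    (∀ r t, HasDerivAt (fun ρ => φ ρ t) (φr r t) r) →
    (∀ r t, HasDerivAt (fun ρ => φr ρ t) (φrr r t) r) →
    Continuous (fun p : ℝ × ℝ => φ p.1 p.2) →
    Continuous (fun p : ℝ × ℝ => φt p.1 p.2) →
    Continuous (fun p : ℝ × ℝ => φr p.1 p.2) →
    Continuous (fun p : ℝ × ℝ => φrr p.1 p.2) →
    (∀ t ∈ Set.Ico (0 : ℝ) T, φ r₁ t = 0 ∧ φ r₂ t = 0) →
    (∫ t in (0 : ℝ)..T, ∫ r in r₁..r₂,
        (r ^ (-2 : ℝ) * v r t * φt r t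
          + (φrr r t + (((N : ℝ) - 1) / r) * φr r t) * v r t ^ m) * r ^ ((N : ℝ) - 1))
      = (∫ r in r₁..r₂,
          r ^ (-2 : ℝ) * (v r T * φ r T - v₀ r * φ r 0) * r ^ ((N : ℝ) - 1))
        + ∫ t in (0 : ℝ)..T,
            (r₂ ^ ((N : ℝ) - 1) * v r₂ t ^ m * φr r₂ t
              - r₁ ^ ((N : ℝ) - 1) * v r₁ t ^ m * φr r₁ t)


/-- If `f` has derivative `d` at `t` and `f ≤ f t` just left of `t`, then `0 ≤ d`. -/
lemma deriv_nonneg_of_left_max {f : ℝ → ℝ} {d t a : ℝ} (hf : HasDerivAt f d t) (ha : a < t)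
    (hmax : ∀ x ∈ Ioo a t, f x ≤ f t) : 0 ≤ d := by
  have h1 : Tendsto (slope f t) (𝓝[<] t) (𝓝 d) := by
    have := hasDerivAt_iff_tendsto_slope.1 hf
    exact this.mono_left (nhdsWithin_mono _ (fun x hx => ne_of_lt hx))
  refine ge_of_tendsto h1 ?_
  filter_upwards [Ioo_mem_nhdsLT ha] with x hx
  rw [slope_def_field]
  apply div_nonneg_of_nonpos
  · linarith [hmax x hx]
  · linarith [hx.2]

/-- Second derivative test at a local maximum. -/
lemma second_deriv_nonpos_of_localMax {f g : ℝ → ℝ} {d x : ℝ}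
    (hf : ∀ᶠ y in 𝓝 x, HasDerivAt f (g y) y) (hg : HasDerivAt g d x) (hmax : IsLocalMax f x) :
    g x = 0 ∧ d ≤ 0 := by
  have hgx : g x = 0 := hmax.hasDerivAt_eq_zero hf.self_of_nhds
  refine ⟨hgx, ?_⟩
  by_contra hd
  push Not at hd
  have h1 : Tendsto (slope g x) (𝓝[>] x) (𝓝 d) := by
    have := hasDerivAt_iff_tendsto_slope.1 hg
    exact this.mono_left (nhdsWithin_mono _ (fun x hx => ne_of_gt hx))
  have h2 : ∀ᶠ y in 𝓝[>] x, 0 < g y := by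
    filter_upwards [h1.eventually (lt_mem_nhds hd), self_mem_nhdsWithin] with y hy hy'
    rw [slope_def_field, hgx] at hy
    have : 0 < y - x := sub_pos.2 hy'
    have := (div_pos_iff_of_pos_right this).1 hy
    linarith
  have h3 : ∀ᶠ y in 𝓝[>] x, HasDerivAt f (g y) y := hf.filter_mono nhdsWithin_le_nhds
  have h4 : ∀ᶠ y in 𝓝[>] x, f y ≤ f x := hmax.filter_mono nhdsWithin_le_nhds
  obtain ⟨b, hb, hb'⟩ := (mem_nhdsGT_iff_exists_Ioo_subset).1 ((h2.and h3).and h4)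
  have hb0 : x < b := hb
  set c := (x + b) / 2 with hc
  have hc1 : x < c := by rw [hc]; linarith
  have hc2 : c < b := by rw [hc]; linarith
  have hmv : ∃ z ∈ Ioo x c, g z = (f c - f x) / (c - x) := by
    apply exists_hasDerivAt_eq_slope f g hc1
    · intro y hy
      rcases eq_or_lt_of_le hy.1 with h | h
      · rw [← h]; exact hf.self_of_nhds.continuousAt.continuousWithinAt
      · exact (hb' ⟨h, lt_of_le_of_lt hy.2 hc2⟩).1.2.continuousAt.continuousWithinAt
    · intro y hy
      exact (hb' ⟨hy.1, hy.2.trans hc2⟩).1.2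
  obtain ⟨z, hz, hz'⟩ := hmv
  have hzpos := (hb' ⟨hz.1, hz.2.trans hc2⟩).1.1
  have hcle := (hb' ⟨hc1, hc2⟩).2
  have : (f c - f x) / (c - x) ≤ 0 := div_nonpos_of_nonpos_of_nonneg (by linarith) (by linarith)
  linarith

/-- Maximum principle on the whole line for degenerate parabolic inequalities. -/
lemma comparison {T A C : ℝ} (hA : 0 ≤ A) (D Dt Ds Dss : ℝ → ℝ → ℝ)
    (hcont : ContinuousOn (fun p : ℝ × ℝ => D p.1 p.2) (univ ×ˢ Ioi 0))
    (hbd : ∀ s t, 0 < t → t ≤ T → D s t ≤ C)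
    (hstart : ∀ ε > 0, ∃ δ > 0, ∀ s t, 0 < t → t ≤ δ → t ≤ T → D s t ≤ ε)
    (hDt : ∀ s t, 0 < t → t ≤ T → 0 < D s t → HasDerivAt (fun τ => D s τ) (Dt s t) t)
    (hDs : ∀ s t, 0 < t → t ≤ T → 0 < D s t →
      ∀ᶠ σ in 𝓝 s, HasDerivAt (fun σ => D σ t) (Ds σ t) σ)
    (hDss : ∀ s t, 0 < t → t ≤ T → 0 < D s t → HasDerivAt (fun σ => Ds σ t) (Dss s t) s)
    (hineq : ∀ s t, 0 < t → t ≤ T → 0 < D s t → Dt s t ≤ A * max (Dss s t - Ds s t) 0) :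
    ∀ s t, 0 < t → t ≤ T → D s t ≤ 0 := by
  intro s₀ t₀ ht₀ ht₀T
  by_contra hpos
  push Not at hpos
  set d := D s₀ t₀ with hd
  set K := 2 * A + 1 with hK
  set B := exp s₀ + exp (K * t₀ - s₀) with hB
  have hBpos : 0 < B := by positivity
  set ε := d / (2 * B) with hε
  have hεpos : 0 < ε := by positivity
  obtain ⟨δ, hδ, hδ'⟩ := hstart (d / 4) (by positivity)
  set Φ : ℝ → ℝ → ℝ := fun s t => D s t - ε * (exp s + exp (K * t - s)) with hΦ
  have hΦ0 : d / 2 ≤ Φ s₀ t₀ := by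
    have : ε * B = d / 2 := by rw [hε]; field_simp
    simp only [hΦ]
    rw [← hB, this, ← hd]; linarith
  set t1 := min δ t₀ with ht1
  have ht1pos : 0 < t1 := lt_min hδ ht₀
  have hC : d ≤ C := hbd s₀ t₀ ht₀ ht₀T
  -- radius
  obtain ⟨R, hR0, hR⟩ : ∃ R : ℝ, |s₀| < R ∧ C < ε * exp R := by
    have h1 : Tendsto (fun R : ℝ => ε * exp R) atTop atTop :=
      tendsto_exp_atTop.const_mul_atTop hεpos
    exact ((eventually_gt_atTop |s₀|).and (h1.eventually_gt_atTop C)).exists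
  have hKpos : 0 < K := by positivity
  have hout : ∀ s t, 0 < t → t ≤ T → R ≤ |s| → Φ s t < 0 := by
    intro s t ht htT hs
    have h1 : D s t ≤ C := hbd s t ht htT
    have h2 : exp R ≤ exp s + exp (K * t - s) := by
      have hKt : 0 < K * t := by positivity
      rcases abs_cases s with h | h
      · have := exp_le_exp.2 (show R ≤ s by linarith)
        linarith [exp_pos (K * t - s)]
      · have := exp_le_exp.2 (show R ≤ K * t - s by linarith)
        linarith [exp_pos s]
    have h3 := mul_le_mul_of_nonneg_left h2 hεpos.le
    simp only [hΦ]; linarith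
  have hcomp : IsCompact (Icc (-R) R ×ˢ Icc t1 T) := isCompact_Icc.prod isCompact_Icc
  have hΦc : ContinuousOn (fun p : ℝ × ℝ => Φ p.1 p.2) (Icc (-R) R ×ˢ Icc t1 T) := by
    have h1 := hcont.mono (show Icc (-R) R ×ˢ Icc t1 T ⊆ univ ×ˢ Ioi (0:ℝ) from fun p hp =>
      ⟨mem_univ _, lt_of_lt_of_le ht1pos hp.2.1⟩)
    exact h1.sub (by fun_prop)
  have hmem : ((s₀, t₀) : ℝ × ℝ) ∈ Icc (-R) R ×ˢ Icc t1 T := by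
    have := abs_lt.1 hR0
    exact ⟨⟨this.1.le, this.2.le⟩, min_le_right _ _, ht₀T⟩
  obtain ⟨⟨s, t⟩, hst, hmax⟩ := hcomp.exists_isMaxOn ⟨_, hmem⟩ hΦc
  have hmax' : ∀ s' t', s' ∈ Icc (-R) R → t' ∈ Icc t1 T → Φ s' t' ≤ Φ s t := fun s' t' h1 h2 =>
    hmax (show ((s', t') : ℝ × ℝ) ∈ _ from ⟨h1, h2⟩)
  have hΦst : d / 2 ≤ Φ s t := hΦ0.trans (hmax' _ _ hmem.1 hmem.2)
  have htT : t ≤ T := hst.2.2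
  have htpos : 0 < t := lt_of_lt_of_le ht1pos hst.2.1
  have hDΦ : Φ s t ≤ D s t := by
    have : 0 < ε * (exp s + exp (K * t - s)) := by positivity
    simp only [hΦ]; linarith
  have hDpos : 0 < D s t := by linarith
  have hsR : |s| < R := by
    by_contra h
    push Not at h
    linarith [hout s t htpos htT h]
  have ht1t : t1 < t := by
    rcases eq_or_lt_of_le hst.2.1 with h | h
    · exfalso
      have h1 : t ≤ δ := by
        have : t1 ≤ δ := min_le_left _ _
        simp only at h; linarith
      linarith [hδ' s t htpos h1 htT]
    · exact h
  -- time derivative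
  have e1 : HasDerivAt (fun τ => Φ s τ) (Dt s t - ε * (K * exp (K * t - s))) t := by
    have h1 := hDt s t htpos htT hDpos
    have h2 : HasDerivAt (fun τ => exp s + exp (K * τ - s)) (K * exp (K * t - s)) t := by
      have : HasDerivAt (fun τ => K * τ - s) K t := by
        simpa using ((hasDerivAt_id t).const_mul K).sub_const s
      have := (this.exp).const_add (exp s)
      exact this.congr_deriv (by ring)
    exact h1.sub (h2.const_mul ε)
  have e1' := deriv_nonneg_of_left_max e1 ht1t (fun x hx =>
    hmax' s x hst.1 ⟨hx.1.le, hx.2.le.trans htT⟩)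
  have e2 : ∀ᶠ σ in 𝓝 s, HasDerivAt (fun σ => Φ σ t)
      (Ds σ t - ε * (exp σ - exp (K * t - σ))) σ := by
    filter_upwards [hDs s t htpos htT hDpos] with σ hσ
    have h2 : HasDerivAt (fun σ => exp σ + exp (K * t - σ)) (exp σ - exp (K * t - σ)) σ := by
      have : HasDerivAt (fun σ => K * t - σ) (-1) σ := by
        simpa using (hasDerivAt_id σ).const_sub (K * t)
      have := (Real.hasDerivAt_exp σ).add this.exp
      exact this.congr_deriv (by ring)
    exact hσ.sub (h2.const_mul ε)
  have e3 : HasDerivAt (fun σ => Ds σ t - ε * (exp σ - exp (K * t - σ)))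
      (Dss s t - ε * (exp s + exp (K * t - s))) s := by
    have h2 : HasDerivAt (fun σ => exp σ - exp (K * t - σ)) (exp s + exp (K * t - s)) s := by
      have : HasDerivAt (fun σ => K * t - σ) (-1) s := by
        simpa using (hasDerivAt_id s).const_sub (K * t)
      have := (Real.hasDerivAt_exp s).sub this.exp
      exact this.congr_deriv (by ring)
    exact (hDss s t htpos htT hDpos).sub (h2.const_mul ε)
  have hloc : IsLocalMax (fun σ => Φ σ t) s := by
    have := abs_lt.1 hsR
    filter_upwards [Icc_mem_nhds this.1 this.2] with σ hσ
    exact hmax' σ t hσ hst.2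
  obtain ⟨e4, e5⟩ := second_deriv_nonpos_of_localMax e2 e3 hloc
  have e6 := hineq s t htpos htT hDpos
  set E := exp (K * t - s) with hE
  have hEpos : 0 < E := exp_pos _
  have hεE : 0 < ε * E := by positivity
  have e7 : Dss s t - Ds s t ≤ 2 * (ε * E) := by nlinarith
  have e8 : max (Dss s t - Ds s t) 0 ≤ 2 * (ε * E) := max_le e7 (by positivity)
  have e9 := mul_le_mul_of_nonneg_left e8 hA
  have : K * (ε * E) ≤ A * (2 * (ε * E)) := by nlinarith
  rw [hK] at this
  nlinarith

/-- Convexity bound for real powers. -/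
lemma rpow_sub_le {m A x y : ℝ} (hm : 1 < m) (hx : 0 ≤ x) (hy : 0 ≤ y) (hxA : x ≤ A) :
    x ^ m - y ^ m ≤ m * A ^ (m - 1) * max (x - y) 0 := by
  have hA : 0 ≤ A := hx.trans hxA
  have hAm : 0 ≤ A ^ (m - 1) := rpow_nonneg hA _
  rcases le_or_gt x y with h | h
  · have := rpow_le_rpow hx h (by linarith : 0 ≤ m)
    have h2 : 0 ≤ m * A ^ (m - 1) * max (x - y) 0 := by positivity
    linarith
  · have hx0 : 0 < x := lt_of_le_of_lt hy h
    rw [max_eq_left (by linarith)]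
    have hs : -1 ≤ (y - x) / x := by
      rw [le_div_iff₀ hx0]; linarith
    have h1 := one_add_mul_self_le_rpow_one_add hs hm.le
    have h2 : 1 + (y - x) / x = y / x := by field_simp; ring
    rw [h2, div_rpow hy hx0.le] at h1
    have hxm : 0 < x ^ m := rpow_pos_of_pos hx0 _
    rw [le_div_iff₀ hxm] at h1
    have h3 : x ^ m = x ^ (m - 1) * x := by
      rw [← rpow_add_one hx0.ne']; ring_nf
    have h4 : (1 + m * ((y - x) / x)) * x ^ m = x ^ m + m * x ^ (m - 1) * (y - x) := by
      rw [h3]; field_simp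
    have h5 : x ^ (m - 1) ≤ A ^ (m - 1) := rpow_le_rpow hx hxA (by linarith)
    have h6 : m * x ^ (m - 1) * (x - y) ≤ m * A ^ (m - 1) * (x - y) := by
      apply mul_le_mul_of_nonneg_right _ (by linarith)
      apply mul_le_mul_of_nonneg_left h5 (by linarith)
    linarith

/-- The double potential `Q` of a solution `W` in logarithmic variables:
`Q_ss - Q_s = W`, `Q_t = W ^ m`. -/
structure IsPot (m M : ℝ) (W Q Qs : ℝ → ℝ → ℝ) (Q0 : ℝ → ℝ) : Prop where
  W_nonneg : ∀ s t, 0 ≤ W s t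
  W_bdd : ∀ T, 0 < T → ∃ C, ∀ s t, 0 < t → t ≤ T → W s t ≤ C
  der_s : ∀ s t, 0 < t → HasDerivAt (fun σ => Q σ t) (Qs s t) s
  der_ss : ∀ s t, 0 < t → HasDerivAt (fun σ => Qs σ t) (W s t + Qs s t) s
  der_t : ∀ s t, 0 < t → HasDerivAt (fun τ => Q s τ) (W s t ^ m) t
  cont : ContinuousOn (fun p : ℝ × ℝ => Q p.1 p.2) (univ ×ˢ Ioi 0)
  ge_start : ∀ s t, 0 < t → Q0 s ≤ Q s t
  le_start : ∀ T, 0 < T → ∃ C, ∀ s t, 0 < t → t ≤ T → Q s t ≤ Q0 s + C * t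
  Q0_nonneg : ∀ s, 0 ≤ Q0 s
  Q0_le : ∀ s, Q0 s ≤ M
  Q0_bot : Tendsto Q0 atBot (𝓝 M)
  Q0_top : Tendsto Q0 atTop (𝓝 0)

lemma IsPot.M_nonneg {m M : ℝ} {W Q Qs : ℝ → ℝ → ℝ} {Q0 : ℝ → ℝ}
    (h : IsPot m M W Q Qs Q0) : 0 ≤ M := (h.Q0_nonneg 0).trans (h.Q0_le 0)

lemma IsPot.W_bdd' {m M : ℝ} {W Q Qs : ℝ → ℝ → ℝ} {Q0 : ℝ → ℝ}
    (h : IsPot m M W Q Qs Q0) (T : ℝ) (hT : 0 < T) :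
    ∃ C, 0 ≤ C ∧ ∀ s t, 0 < t → t ≤ T → W s t ≤ C := by
  obtain ⟨C, hC⟩ := h.W_bdd T hT
  exact ⟨C, (h.W_nonneg 0 T).trans (hC 0 T hT le_rfl), hC⟩

lemma small_start {C ε : ℝ} (hε : 0 < ε) : ∃ δ > 0, ∀ t, 0 < t → t ≤ δ → C * t ≤ ε := by
  refine ⟨ε / (|C| + 1), by positivity, fun t ht htd => ?_⟩
  have h1 : C * t ≤ (|C| + 1) * t := by
    apply mul_le_mul_of_nonneg_right _ ht.le
    linarith [le_abs_self C]
  have h2 : (|C| + 1) * t ≤ ε := by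
    rw [le_div_iff₀ (by positivity)] at htd
    linarith
  linarith

/-- General comparison from above: `Q ≤ f` for supersolutions `f`. -/
lemma IsPot.le_super {m M : ℝ} (hm : 1 < m) {W Q Qs : ℝ → ℝ → ℝ} {Q0 : ℝ → ℝ}
    (h : IsPot m M W Q Qs Q0) (f ft fs X : ℝ → ℝ → ℝ)
    (hfc : ContinuousOn (fun p : ℝ × ℝ => f p.1 p.2) (univ ×ˢ Ioi 0))
    (hf0 : ∀ s t, 0 < t → 0 ≤ f s t)
    (hstart : ∀ s t, 0 < t → Q0 s ≤ f s t)
    (hft : ∀ s t, 0 < t → HasDerivAt (fun τ => f s τ) (ft s t) t)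
    (hfs : ∀ s t, 0 < t → HasDerivAt (fun σ => f σ t) (fs s t) s)
    (hfss : ∀ s t, 0 < t → HasDerivAt (fun σ => fs σ t) (X s t + fs s t) s)
    (hX0 : ∀ s t, 0 < t → 0 ≤ X s t)
    (hX : ∀ s t, 0 < t → X s t ^ m ≤ ft s t) :
    ∀ s t, 0 < t → Q s t ≤ f s t := by
  intro s t ht
  obtain ⟨A, hA, hWA⟩ := h.W_bdd' t ht
  obtain ⟨C, hC⟩ := h.le_start t ht
  have key := comparison (T := t) (A := m * A ^ (m - 1)) (C := M + |C| * t)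
    (by positivity)
    (fun s t => Q s t - f s t) (fun s t => W s t ^ m - ft s t) (fun s t => Qs s t - fs s t)
    (fun s t => (W s t + Qs s t) - (X s t + fs s t))
    (h.cont.sub hfc)
    (by
      intro s' t' h1 h2
      have e1 := hC s' t' h1 h2
      have e2 := hf0 s' t' h1
      have e3 := h.Q0_le s'
      have e4 : C * t' ≤ |C| * t := by
        apply mul_le_mul (le_abs_self C) h2 h1.le (abs_nonneg _)
      linarith)
    (by
      intro ε hε
      obtain ⟨δ, hδ, hδ'⟩ := small_start (C := C) hε
      refine ⟨δ, hδ, fun s' t' h1 h2 h3 => ?_⟩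
      have e1 := hC s' t' h1 h3
      have e2 := hstart s' t' h1
      have e3 := hδ' t' h1 h2
      linarith)
    (fun s t ht _ _ => (h.der_t s t ht).sub (hft s t ht))
    (fun s t ht _ _ => Eventually.of_forall fun σ => (h.der_s σ t ht).sub (hfs σ t ht))
    (fun s t ht _ _ => (h.der_ss s t ht).sub (hfss s t ht))
    (by
      intro s' t' h1 h2 _
      have e1 := rpow_sub_le hm (h.W_nonneg s' t') (hX0 s' t' h1) (hWA s' t' h1 h2)
      have e2 := hX s' t' h1
      have e3 : (W s' t' + Qs s' t') - (X s' t' + fs s' t') - (Qs s' t' - fs s' t')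
        = W s' t' - X s' t' := by ring
      rw [e3]; linarith)
  have := key s t ht le_rfl
  linarith

lemma IsPot.le_M {m M : ℝ} (hm : 1 < m) {W Q Qs : ℝ → ℝ → ℝ} {Q0 : ℝ → ℝ}
    (h : IsPot m M W Q Qs Q0) : ∀ s t, 0 < t → Q s t ≤ M := by
  refine h.le_super hm (fun _ _ => M) (fun _ _ => 0) (fun _ _ => 0) (fun _ _ => 0) (by fun_prop)
    (fun _ _ _ => h.M_nonneg) (fun s _ _ => h.Q0_le s) (fun _ _ _ => hasDerivAt_const _ _)
    (fun _ _ _ => hasDerivAt_const _ _) (fun _ _ _ => ?_) (fun _ _ _ => le_rfl) (fun _ _ _ => ?_)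
  · simpa using hasDerivAt_const _ _
  · rw [zero_rpow (by linarith)]

lemma IsPot.nonneg {m M : ℝ} {W Q Qs : ℝ → ℝ → ℝ} {Q0 : ℝ → ℝ}
    (h : IsPot m M W Q Qs Q0) (s t : ℝ) (ht : 0 < t) : 0 ≤ Q s t :=
  (h.Q0_nonneg s).trans (h.ge_start s t ht)

/-- Convexity of `Q` in the variable `x = t ^ (-1/(m-1))`. -/
lemma IsPot.convex {m M : ℝ} (hm : 1 < m) {W Q Qs : ℝ → ℝ → ℝ} {Q0 : ℝ → ℝ}
    (h : IsPot m M W Q Qs Q0) (s : ℝ) :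
    ConvexOn ℝ (Ioi 0) (fun x : ℝ => Q s (x ^ (-(m - 1)))) := by
  refine ⟨convex_Ioi 0, ?_⟩
  intro x₁ hx₁ x₂ hx₂ a b ha hb hab
  simp only [smul_eq_mul, mem_Ioi] at *
  set x := a * x₁ + b * x₂ with hx
  have hxpos : 0 < x := by
    rcases eq_or_lt_of_le ha with h0 | h0
    · have : b = 1 := by linarith
      rw [hx, ← h0, this]; linarith
    · have : 0 < a * x₁ := by positivity
      have : 0 ≤ b * x₂ := by positivity
      rw [hx]; linarith
  set l₁ := x / x₁ with hl₁
  set l₂ := x / x₂ with hl₂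
  have hl₁p : 0 < l₁ := by positivity
  have hl₂p : 0 < l₂ := by positivity
  set μ₁ := l₁ ^ (m - 1) with hμ₁
  set μ₂ := l₂ ^ (m - 1) with hμ₂
  have hμ₁p : 0 < μ₁ := rpow_pos_of_pos hl₁p _
  have hμ₂p : 0 < μ₂ := rpow_pos_of_pos hl₂p _
  have hw : a / l₁ + b / l₂ = 1 := by
    rw [hl₁, hl₂]
    field_simp
    rw [hx]
  have main := h.le_super hm (fun s t => a * Q s (μ₁ * t) + b * Q s (μ₂ * t))
    (fun s t => a * (W s (μ₁ * t) ^ m * μ₁) + b * (W s (μ₂ * t) ^ m * μ₂))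
    (fun s t => a * Qs s (μ₁ * t) + b * Qs s (μ₂ * t))
    (fun s t => a * W s (μ₁ * t) + b * W s (μ₂ * t))
    (by
      have hc : ∀ μ : ℝ, 0 < μ →
          ContinuousOn (fun p : ℝ × ℝ => Q p.1 (μ * p.2)) (univ ×ˢ Ioi 0) := by
        intro μ hμ
        have : ContinuousOn (fun p : ℝ × ℝ => ((p.1, μ * p.2) : ℝ × ℝ)) (univ ×ˢ Ioi 0) := by
          fun_prop
        exact h.cont.comp this (fun p hp => ⟨mem_univ _, mul_pos hμ hp.2⟩)
      exact ((hc μ₁ hμ₁p).const_smul a).add ((hc μ₂ hμ₂p).const_smul b))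
    (by
      intro s t ht
      have e1 := h.nonneg s (μ₁ * t) (by positivity)
      have e2 := h.nonneg s (μ₂ * t) (by positivity)
      positivity)
    (by
      intro s t ht
      have e1 := h.ge_start s (μ₁ * t) (by positivity)
      have e2 := h.ge_start s (μ₂ * t) (by positivity)
      have e3 := mul_le_mul_of_nonneg_left e1 ha
      have e4 := mul_le_mul_of_nonneg_left e2 hb
      have e5 : Q0 s = a * Q0 s + b * Q0 s := by rw [← add_mul, hab, one_mul]
      linarith)
    (by
      intro s t ht
      have hd : ∀ μ : ℝ, 0 < μ → HasDerivAt (fun τ => Q s (μ * τ)) (W s (μ * t) ^ m * μ) t := by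
        intro μ hμ
        have e1 := h.der_t s (μ * t) (by positivity)
        have e2 : HasDerivAt (fun τ => μ * τ) μ t := by
          simpa using (hasDerivAt_id t).const_mul μ
        exact e1.comp t e2
      exact ((hd μ₁ hμ₁p).const_mul a).add ((hd μ₂ hμ₂p).const_mul b))
    (by
      intro s t ht
      exact ((h.der_s s (μ₁ * t) (by positivity)).const_mul a).add
        ((h.der_s s (μ₂ * t) (by positivity)).const_mul b))
    (by
      intro s t ht
      have := ((h.der_ss s (μ₁ * t) (by positivity)).const_mul a).add
        ((h.der_ss s (μ₂ * t) (by positivity)).const_mul b)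
      exact this.congr_deriv (by ring))
    (by
      intro s t ht
      have e1 := h.W_nonneg s (μ₁ * t)
      have e2 := h.W_nonneg s (μ₂ * t)
      positivity)
    (by
      intro s t ht
      have e1 := h.W_nonneg s (μ₁ * t)
      have e2 := h.W_nonneg s (μ₂ * t)
      set w₁ := W s (μ₁ * t)
      set w₂ := W s (μ₂ * t)
      have hconv := (convexOn_rpow hm.le).2 (show l₁ * w₁ ∈ Ici (0:ℝ) from by
        simp only [mem_Ici]; positivity) (show l₂ * w₂ ∈ Ici (0:ℝ) from by
        simp only [mem_Ici]; positivity) (show 0 ≤ a / l₁ by positivity)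
        (show 0 ≤ b / l₂ by positivity) hw
      simp only [smul_eq_mul] at hconv
      have e3 : a / l₁ * (l₁ * w₁) + b / l₂ * (l₂ * w₂) = a * w₁ + b * w₂ := by
        field_simp
      have e4 : ∀ (c l w : ℝ), 0 < l → 0 ≤ w → c / l * (l * w) ^ m = c * (w ^ m * l ^ (m - 1)) := by
        intro c l w hl hw
        rw [mul_rpow hl.le hw, rpow_sub_one hl.ne']
        field_simp
      rw [e3, e4 a l₁ w₁ hl₁p e1, e4 b l₂ w₂ hl₂p e2] at hconv
      exact hconv)
  have hfin := main s (x ^ (-(m - 1))) (rpow_pos_of_pos hxpos _)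
  have e5 : ∀ y : ℝ, 0 < y → (x / y) ^ (m - 1) * x ^ (-(m - 1)) = y ^ (-(m - 1)) := by
    intro y hy
    rw [div_rpow hxpos.le hy.le, rpow_neg hxpos.le, rpow_neg hy.le]
    have : 0 < x ^ (m - 1) := rpow_pos_of_pos hxpos _
    field_simp
  rw [hμ₁, hμ₂, hl₁, hl₂] at hfin
  rw [e5 x₁ hx₁, e5 x₂ hx₂] at hfin
  exact hfin

lemma log_one_add_exp_le (x : ℝ) : Real.log (1 + exp x) ≤ Real.log 2 + max x 0 := by
  have h1 : (1 : ℝ) ≤ exp (max x 0) := one_le_exp (le_max_right _ _)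
  have h2 : exp x ≤ exp (max x 0) := exp_le_exp.2 (le_max_left _ _)
  have h3 : Real.log (1 + exp x) ≤ Real.log (2 * exp (max x 0)) :=
    Real.log_le_log (by positivity) (by linarith)
  rwa [Real.log_mul (by norm_num) (exp_pos _).ne', Real.log_exp] at h3

/-- Upper bound by smoothed travelling fronts. -/
lemma IsPot.upper {m M : ℝ} (hm : 1 < m) {W Q Qs : ℝ → ℝ → ℝ} {Q0 : ℝ → ℝ}
    (h : IsPot m M W Q Qs Q0) {p ε s₁ : ℝ} (hp : 0 < p) (hε : 0 ≤ ε)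
    (hs₁ : ∀ s, s₁ ≤ s → Q0 s ≤ ε) (s t : ℝ) (ht : 0 < t) :
    Q s t ≤ ε + p * (Real.log 2 / ((m - 1) / m))
      + max (M + p * s₁ + p ^ m * t - p * s) 0 := by
  set a := (m - 1) / m with ha
  have hm0 : 0 < m := by linarith
  have ha0 : 0 < a := div_pos (by linarith) hm0
  have ha1 : 1 - a = 1 / m := by rw [ha]; field_simp; ring
  set V := p ^ (m - 1) with hV
  have hVp : 0 < V := rpow_pos_of_pos hp _
  have hpm : p * V = p ^ m := by
    rw [hV, rpow_sub_one hp.ne']; field_simp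
  set s₀ := s₁ + M / p with hs₀
  let e : ℝ → ℝ → ℝ := fun s t => -(a * (s - s₀ - V * t))
  let E : ℝ → ℝ → ℝ := fun s t => exp (e s t)
  have hE : ∀ s t, 0 < E s t := fun s t => exp_pos _
  let σ : ℝ → ℝ → ℝ := fun s t => E s t / (1 + E s t)
  have hσ0 : ∀ s t, 0 < σ s t := fun s t => div_pos (hE s t) (by linarith [hE s t])
  have hσ1 : ∀ s t, σ s t < 1 := fun s t => by
    have := hE s t
    show E s t / (1 + E s t) < 1
    rw [div_lt_one (by linarith)]; linarith
  have hEs : ∀ s t, HasDerivAt (fun x => E x t) (-(a * E s t)) s := by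
    intro s t
    have h1 : HasDerivAt (fun x => e x t) (-(a * 1)) s :=
      ((((hasDerivAt_id s).sub_const s₀).sub_const (V * t)).const_mul a).neg
    exact h1.exp.congr_deriv (by show exp (e s t) * _ = -(a * exp (e s t)); ring)
  have hEt : ∀ s t, HasDerivAt (fun x => E s x) (a * V * E s t) t := by
    intro s t
    have h1 : HasDerivAt (fun x => e s x) (-(a * (-(V * 1)))) t :=
      ((((hasDerivAt_id t).const_mul V).const_sub (s - s₀)).const_mul a).neg
    exact h1.exp.congr_deriv (by show exp (e s t) * _ = a * V * exp (e s t); ring)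
  have main := h.le_super hm (fun s t => ε + p / a * Real.log (1 + E s t))
    (fun s t => p ^ m * σ s t) (fun s t => -(p * σ s t))
    (fun s t => p * (σ s t * (1 + a * (1 - σ s t))))
    (by
      apply Continuous.continuousOn
      apply continuous_const.add
      apply continuous_const.mul
      apply Continuous.log
      · show Continuous fun p : ℝ × ℝ => 1 + exp (-(a * (p.1 - s₀ - V * p.2)))
        fun_prop
      · intro p
        linarith [hE p.1 p.2])
    (by
      intro s t ht
      have : 0 ≤ Real.log (1 + E s t) := Real.log_nonneg (by linarith [hE s t])
      positivity)
    (by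
      intro s t ht
      have hl : 0 ≤ Real.log (1 + E s t) := Real.log_nonneg (by linarith [hE s t])
      have hl' : 0 ≤ p / a * Real.log (1 + E s t) := by positivity
      rcases le_or_gt s₁ s with hs | hs
      · linarith [hs₁ s hs]
      · have h1 : e s t ≤ Real.log (1 + E s t) := by
          rw [Real.le_log_iff_exp_le (by linarith [hE s t])]
          show E s t ≤ _
          linarith
        have h2 : p / a * e s t ≤ p / a * Real.log (1 + E s t) :=
          mul_le_mul_of_nonneg_left h1 (by positivity)
        have h3 : p / a * e s t = p * (s₁ - s) + M + p * V * t := by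
          show p / a * (-(a * (s - s₀ - V * t))) = _
          rw [hs₀]; field_simp; ring
        have h4 : 0 ≤ p * (s₁ - s) := mul_nonneg hp.le (by linarith)
        have h5 : 0 ≤ p * V * t := by positivity
        linarith [h.Q0_le s])
    (by
      intro s t ht
      have h1 := (((hEt s t).const_add 1).log (by linarith [hE s t])).const_mul (p / a)
      refine (h1.const_add ε).congr_deriv ?_
      show p / a * (a * V * E s t / (1 + E s t)) = p ^ m * (E s t / (1 + E s t))
      rw [← hpm]; field_simp)
    (by
      intro s t ht
      have h1 := (((hEs s t).const_add 1).log (by linarith [hE s t])).const_mul (p / a)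
      refine (h1.const_add ε).congr_deriv ?_
      show p / a * (-(a * E s t) / (1 + E s t)) = -(p * (E s t / (1 + E s t)))
      have : 1 + E s t ≠ 0 := by linarith [hE s t]
      field_simp)
    (by
      intro s t ht
      have hne : 1 + E s t ≠ 0 := by linarith [hE s t]
      have h1 := (((hEs s t).div ((hEs s t).const_add 1) hne).const_mul p).neg
      refine h1.congr_deriv ?_
      show _ = p * (E s t / (1 + E s t) * (1 + a * (1 - E s t / (1 + E s t))))
        + -(p * (E s t / (1 + E s t)))
      field_simp
      ring)
    (by
      intro s t ht
      have h1 := hσ0 s t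
      have h2 : 0 < 1 - σ s t := by linarith [hσ1 s t]
      positivity)
    (by
      intro s t ht
      have h1 := hσ0 s t
      have h2 : 0 < 1 - σ s t := by linarith [hσ1 s t]
      generalize σ s t = z at h1 h2
      have h3 : 1 + a * (1 - z) ≤ z ^ (-a) := by
        rw [rpow_def_of_pos h1]
        have e1 := add_one_le_exp (Real.log z * -a)
        have e2 := Real.log_le_sub_one_of_pos h1
        nlinarith
      have h4 : z * (1 + a * (1 - z)) ≤ z ^ (1 / m) := by
        have e1 : z * z ^ (-a) = z ^ (1 / m) := by
          rw [← ha1, sub_eq_add_neg, rpow_add h1, rpow_one]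
        rw [← e1]
        exact mul_le_mul_of_nonneg_left h3 h1.le
      have h5 : 0 ≤ z * (1 + a * (1 - z)) := by positivity
      show (p * (z * (1 + a * (1 - z)))) ^ m ≤ p ^ m * z
      rw [mul_rpow hp.le h5]
      apply mul_le_mul_of_nonneg_left _ (rpow_nonneg hp.le _)
      calc (z * (1 + a * (1 - z))) ^ m ≤ (z ^ (1 / m)) ^ m := rpow_le_rpow h5 h4 hm0.le
        _ = z := by rw [← rpow_mul h1.le, one_div_mul_cancel hm0.ne', rpow_one])
  have hfin := main s t ht
  have h1 : p / a * Real.log (1 + E s t) ≤ p / a * (Real.log 2 + max (e s t) 0) :=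
    mul_le_mul_of_nonneg_left (log_one_add_exp_le _) (by positivity)
  have h2 : p / a * max (e s t) 0 = max (M + p * s₁ + p ^ m * t - p * s) 0 := by
    rw [mul_max_of_nonneg _ _ (by positivity : 0 ≤ p / a), mul_zero]
    congr 1
    show p / a * (-(a * (s - s₀ - V * t))) = _
    rw [hs₀, ← hpm]; field_simp; ring
  have h3 : p / a * Real.log 2 = p * (Real.log 2 / a) := by ring
  rw [mul_add, h2, h3] at h1
  linarith

/-- Lower bound by a perturbed rarefaction profile. -/
lemma IsPot.lower {m M : ℝ} (hm : 1 < m) {W Q Qs : ℝ → ℝ → ℝ} {Q0 : ℝ → ℝ}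
    (h : IsPot m M W Q Qs Q0) {b ε z S : ℝ} (hb : 1 < b) (hε : 0 ≤ ε)
    (hz : ∀ s, s ≤ z → M - ε ≤ Q0 s) (hS0 : 0 < S) (hκ : 0 < 1 - 1 / ((m - 1) * S))
    (hS : 1 ≤ b ^ (m - 1) * (1 - 1 / ((m - 1) * S)) ^ m)
    (s t : ℝ) (ht : 0 < t) :
    M - ε - b * (m - 1) * (t * (max (s - z + S) 0 / (m * t)) ^ (1 / (m - 1) + 1)) ≤ Q s t := by
  have hm0 : 0 < m := by linarith
  have hm1 : 0 < m - 1 := by linarith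
  have hb0 : 0 < b := by linarith
  set n := 1 / (m - 1) with hn
  have hn0 : 0 < n := by positivity
  have hnm : n * (m - 1) = 1 := by rw [hn]; field_simp
  set κS := 1 - 1 / ((m - 1) * S) with hκS
  have hM := h.M_nonneg
  let v : ℝ → ℝ → ℝ := fun s t => (s - z + S) / (m * t)
  let B : ℝ → ℝ → ℝ := fun s t =>
    M - ε - b * (m - 1) * (t * (max (s - z + S) 0 / (m * t)) ^ (n + 1))
  have hBle : ∀ s t, 0 < t → B s t ≤ M - ε := by
    intro s t ht
    have : 0 ≤ b * (m - 1) * (t * (max (s - z + S) 0 / (m * t)) ^ (n + 1)) := by positivity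
    show M - ε - _ ≤ _
    linarith
  -- where the difference is positive
  have hpos : ∀ s t, 0 < t → 0 < B s t - Q s t → z < s := by
    intro s t ht hD
    by_contra hs
    push Not at hs
    linarith [hBle s t ht, hz s hs, h.ge_start s t ht]
  set H := m * M / ((m - 1) * S) with hH
  have hH0 : 0 ≤ H := by positivity
  have hBv : ∀ s t, 0 < t → z < s → B s t = M - ε - b * (m - 1) * (t * v s t ^ (n + 1)) := by
    intro s t ht hs
    show M - ε - _ = _
    rw [max_eq_left (by linarith)]
  have hvpos : ∀ s t, 0 < t → z < s → 0 < v s t := by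
    intro s t ht hs
    exact div_pos (by linarith) (by positivity)
  have hhH : ∀ s t, 0 < t → 0 < B s t - Q s t → v s t ^ n ≤ H := by
    intro s t ht hD
    have hs := hpos s t ht hD
    have hv := hvpos s t ht hs
    have h1 : 0 < B s t := by linarith [h.nonneg s t ht]
    rw [hBv s t ht hs, rpow_add_one hv.ne'] at h1
    have hvn : 0 < v s t ^ n := rpow_pos_of_pos hv _
    have h2 : t * v s t = (s - z + S) / m := by
      show t * ((s - z + S) / (m * t)) = _
      field_simp
    have h3 : S / m ≤ t * v s t := by
      rw [h2]; gcongr; linarith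
    have h4 : (m - 1) * (v s t ^ n * (S / m)) ≤ M := by
      have e1 : v s t ^ n * (S / m) ≤ v s t ^ n * (t * v s t) :=
        mul_le_mul_of_nonneg_left h3 hvn.le
      have e2 : (m - 1) * (v s t ^ n * (S / m)) ≤ (m - 1) * (v s t ^ n * (t * v s t)) :=
        mul_le_mul_of_nonneg_left e1 hm1.le
      have e3 : 0 ≤ (m - 1) * (v s t ^ n * (t * v s t)) := by positivity
      nlinarith
    rw [hH, le_div_iff₀ (by positivity)]
    have : (m - 1) * (v s t ^ n * (S / m)) * m = v s t ^ n * ((m - 1) * S) := by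
      field_simp
    nlinarith
  let X : ℝ → ℝ → ℝ := fun s t => b * v s t ^ n - b * (n * v s t ^ (n - 1) * (1 / (m * t)))
  have hvs : ∀ s t, HasDerivAt (fun x => v x t) (1 / (m * t)) s := by
    intro s t
    exact (((hasDerivAt_id s).sub_const z).add_const S).div_const (m * t)
  have hvt : ∀ s t, 0 < t → HasDerivAt (fun x => v s x) (-(v s t / t)) t := by
    intro s t ht
    have h1 : HasDerivAt (fun x => m * x) m t := by
      simpa using (hasDerivAt_id t).const_mul m
    have h2 := (hasDerivAt_const t (s - z + S)).div h1 (by positivity)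
    refine h2.congr_deriv ?_
    show _ = -((s - z + S) / (m * t) / t)
    field_simp; ring
  have hXeq : ∀ s t, 0 < t → z < s →
      X s t = b * v s t ^ n * (1 - 1 / ((m - 1) * (s - z + S))) := by
    intro s t ht hs
    have hv := hvpos s t ht hs
    show b * v s t ^ n - b * (n * v s t ^ (n - 1) * (1 / (m * t))) = _
    rw [rpow_sub_one hv.ne']
    have hsz : s - z + S ≠ 0 := by linarith
    have e1 : 1 / (m * t) = v s t / (s - z + S) := by
      show _ = (s - z + S) / (m * t) / (s - z + S)
      field_simp
    rw [e1, hn]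
    field_simp
  have hκle : ∀ s, z < s → κS ≤ 1 - 1 / ((m - 1) * (s - z + S)) := by
    intro s hs
    rw [hκS]
    have : 1 / ((m - 1) * (s - z + S)) ≤ 1 / ((m - 1) * S) := by
      apply one_div_le_one_div_of_le (by positivity)
      apply mul_le_mul_of_nonneg_left (by linarith) hm1.le
    linarith
  have key := comparison (T := t) (A := m * (b * H) ^ (m - 1)) (C := M)
    (by positivity)
    (fun s t => B s t - Q s t) (fun s t => b * v s t ^ (n + 1) - W s t ^ m)
    (fun s t => -(b * v s t ^ n) - Qs s t)
    (fun s t => (X s t - b * v s t ^ n) - (W s t + Qs s t))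
    (by
      refine ContinuousOn.sub ?_ h.cont
      refine continuousOn_const.sub (continuousOn_const.mul (continuousOn_snd.mul ?_))
      refine ContinuousOn.rpow_const ?_ (fun _ _ => Or.inr (by positivity))
      refine ContinuousOn.div (by fun_prop) (by fun_prop) ?_
      intro p hp
      have : 0 < p.2 := hp.2
      positivity)
    (by
      intro s' t' h1 h2
      linarith [hBle s' t' h1, h.nonneg s' t' h1])
    (by
      intro ε' hε'
      refine ⟨S / (2 * m * (H + 1) ^ (m - 1)), by positivity, fun s' t' h1 h2 h3 => ?_⟩
      by_contra hD
      push Not at hD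
      have hD' : 0 < B s' t' - Q s' t' := hε'.trans hD
      have hs := hpos s' t' h1 hD'
      have hv := hvpos s' t' h1 hs
      have e1 := hhH s' t' h1 hD'
      have e2 : v s' t' ≤ (H + 1) ^ (m - 1) := by
        have e3 : (v s' t' ^ n) ^ (m - 1) ≤ (H + 1) ^ (m - 1) :=
          rpow_le_rpow (by positivity) (by linarith) hm1.le
        rwa [← rpow_mul hv.le, hnm, rpow_one] at e3
      have hHp : 0 < (H + 1) ^ (m - 1) := by positivity
      rw [le_div_iff₀ (by positivity)] at h2
      have e4 : v s' t' * (m * t') = s' - z + S := by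
        show (s' - z + S) / (m * t') * (m * t') = _
        field_simp
      have e5 : v s' t' * (m * t') ≤ (H + 1) ^ (m - 1) * (m * t') :=
        mul_le_mul_of_nonneg_right e2 (by positivity)
      nlinarith)
    (by
      intro s t ht _ hD
      have hs := hpos s t ht hD
      have hv := hvpos s t ht hs
      have e1 : HasDerivAt (fun x => M - ε - b * (m - 1) * (x * v s x ^ (n + 1)))
          (b * v s t ^ (n + 1)) t := by
        have e2 := (hvt s t ht).rpow_const (p := n + 1) (Or.inl hv.ne')
        have e3 := (((hasDerivAt_id t).mul e2).const_mul (b * (m - 1))).const_sub (M - ε)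
        refine e3.congr_deriv ?_
        have e4 : n + 1 - 1 = n := by ring
        simp only [id, e4]
        rw [rpow_add_one hv.ne', hn]
        field_simp
        ring
      refine HasDerivAt.sub ?_ (h.der_t s t ht)
      refine e1.congr_of_eventuallyEq ?_
      filter_upwards [lt_mem_nhds ht] with x hx
      exact hBv s x hx hs)
    (by
      intro s t ht _ hD
      have hs := hpos s t ht hD
      filter_upwards [lt_mem_nhds hs] with y hy
      have hv := hvpos y t ht hy
      have e1 : HasDerivAt (fun x => M - ε - b * (m - 1) * (t * v x t ^ (n + 1)))
          (-(b * v y t ^ n)) y := by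
        have e2 := (hvs y t).rpow_const (p := n + 1) (Or.inl hv.ne')
        have e3 := ((e2.const_mul t).const_mul (b * (m - 1))).const_sub (M - ε)
        refine e3.congr_deriv ?_
        have e4 : n + 1 - 1 = n := by ring
        rw [e4, hn]
        field_simp
        ring
      refine HasDerivAt.sub ?_ (h.der_s y t ht)
      refine e1.congr_of_eventuallyEq ?_
      filter_upwards [lt_mem_nhds hy] with x hx
      exact hBv x t ht hx)
    (by
      intro s t ht _ hD
      have hs := hpos s t ht hD
      have hv := hvpos s t ht hs
      have e2 := (((hvs s t).rpow_const (p := n) (Or.inl hv.ne')).const_mul b).neg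
      refine (e2.congr_deriv ?_).sub (h.der_ss s t ht)
      show _ = b * v s t ^ n - b * (n * v s t ^ (n - 1) * (1 / (m * t))) - b * v s t ^ n
      ring)
    (by
      intro s t ht _ hD
      have hs := hpos s t ht hD
      have hv := hvpos s t ht hs
      have hvn : 0 < v s t ^ n := rpow_pos_of_pos hv _
      have eX := hXeq s t ht hs
      have hκ' := hκle s hs
      set κ := 1 - 1 / ((m - 1) * (s - z + S)) with hκd
      have hκ1 : κ ≤ 1 := by
        have : 0 ≤ 1 / ((m - 1) * (s - z + S)) := by
          have : 0 < s - z + S := by linarith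
          positivity
        linarith
      have hκ0 : 0 < κ := lt_of_lt_of_le hκ hκ'
      have hX0 : 0 ≤ X s t := by rw [eX]; positivity
      have hXA : X s t ≤ b * H := by
        rw [eX]
        have e1 : b * v s t ^ n * κ ≤ b * v s t ^ n * 1 :=
          mul_le_mul_of_nonneg_left hκ1 (by positivity)
        have e2 := mul_le_mul_of_nonneg_left (hhH s t ht hD) hb0.le
        linarith
      have hXm : b * v s t ^ (n + 1) ≤ X s t ^ m := by
        have e1 : (v s t ^ n) ^ m = v s t ^ (n + 1) := by
          rw [← rpow_mul hv.le]; congr 1; linarith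
        rw [eX, mul_rpow (by positivity) hκ0.le, mul_rpow hb0.le hvn.le, e1]
        have e2 : κS ^ m ≤ κ ^ m := rpow_le_rpow hκ.le hκ' hm0.le
        have e3 : b ^ m = b * b ^ (m - 1) := by
          rw [rpow_sub_one hb0.ne']; field_simp
        have e4 : 1 ≤ b ^ (m - 1) * κ ^ m :=
          hS.trans (mul_le_mul_of_nonneg_left e2 (by positivity))
        rw [e3]
        have e5 : 0 ≤ b * v s t ^ (n + 1) := by positivity
        have e6 := mul_le_mul_of_nonneg_left e4 e5
        linarith
      have e1 := rpow_sub_le hm hX0 (h.W_nonneg s t) hXA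
      have e3 : X s t - b * v s t ^ n - (W s t + Qs s t) - (-(b * v s t ^ n) - Qs s t)
        = X s t - W s t := by ring
      show _ ≤ m * (b * H) ^ (m - 1) * max (X s t - b * v s t ^ n - (W s t + Qs s t)
        - (-(b * v s t ^ n) - Qs s t)) 0
      rw [e3]; linarith)
  have := key s t ht le_rfl
  have e : B s t - Q s t ≤ 0 := this
  show B s t ≤ _
  linarith

/-- The limiting potential. -/
def limG (m M y : ℝ) : ℝ := max (M - (m - 1) * (max y 0 / m) ^ (1 / (m - 1) + 1)) 0

/-- The limiting profile. -/
def limg (m k y : ℝ) : ℝ := if y < k then (max (y / m) 0) ^ (1 / (m - 1)) else 0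

lemma rpow_inv_mul_self {m t : ℝ} (hm : 1 < m) (ht : 0 < t) :
    t ^ (-(1 / m)) * t ^ (1 / m) = 1 := by
  rw [rpow_neg ht.le, inv_mul_cancel₀ (rpow_pos_of_pos ht _).ne']

lemma exists_S {m b : ℝ} (hm : 1 < m) (hb : 1 < b) : ∃ S, 0 < S ∧ 0 < 1 - 1 / ((m - 1) * S) ∧
    1 ≤ b ^ (m - 1) * (1 - 1 / ((m - 1) * S)) ^ m := by
  have hm1 : 0 < m - 1 := by linarith
  have h1 : Tendsto (fun S : ℝ => 1 - 1 / ((m - 1) * S)) atTop (𝓝 1) := by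
    have : Tendsto (fun S : ℝ => 1 / ((m - 1) * S)) atTop (𝓝 0) :=
      (tendsto_const_nhds (x := (1:ℝ))).div_atTop (tendsto_id.const_mul_atTop hm1)
    simpa using this.const_sub 1
  have h2 : Tendsto (fun S : ℝ => b ^ (m - 1) * (1 - 1 / ((m - 1) * S)) ^ m) atTop
      (𝓝 (b ^ (m - 1) * 1 ^ m)) :=
    (h1.rpow_const (Or.inr (by linarith))).const_mul _
  have h3 : 1 < b ^ (m - 1) * 1 ^ m := by
    rw [one_rpow, mul_one]; exact one_lt_rpow hb hm1
  obtain ⟨S, ⟨hS1, hS2⟩, hS3⟩ := (((eventually_gt_atTop (0:ℝ)).and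
    (h1.eventually (lt_mem_nhds one_pos))).and (h2.eventually (lt_mem_nhds h3))).exists
  exact ⟨S, hS1, hS2, hS3.le⟩

lemma IsPot.tendsto_Q {m M : ℝ} (hm : 1 < m) {W Q Qs : ℝ → ℝ → ℝ} {Q0 : ℝ → ℝ}
    (h : IsPot m M W Q Qs Q0) {y : ℝ} (hy : y ≠ 0) :
    Tendsto (fun t => Q (y * t ^ (1 / m)) t) atTop (𝓝 (limG m M y)) := by
  have hm0 : 0 < m := by linarith
  have hm1 : 0 < m - 1 := by linarith
  have hM := h.M_nonneg
  have htop : Tendsto (fun t : ℝ => t ^ (1 / m)) atTop atTop :=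
    tendsto_rpow_atTop (by positivity)
  have hτ : Tendsto (fun t : ℝ => t ^ (-(1 / m))) atTop (𝓝 0) :=
    tendsto_rpow_neg_atTop (by positivity)
  rcases lt_or_gt_of_ne hy with hy | hy
  · have hG : limG m M y = M := by
      rw [limG, max_eq_right hy.le, zero_div, zero_rpow (by positivity), mul_zero, sub_zero,
        max_eq_left hM]
    rw [hG]
    have h1 : Tendsto (fun t : ℝ => Q0 (y * t ^ (1 / m))) atTop (𝓝 M) :=
      h.Q0_bot.comp (htop.const_mul_atTop_of_neg hy)
    refine tendsto_of_tendsto_of_tendsto_of_le_of_le' h1 tendsto_const_nhds ?_ ?_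
    · filter_upwards [eventually_gt_atTop 0] with t ht using h.ge_start _ t ht
    · filter_upwards [eventually_gt_atTop 0] with t ht using h.le_M hm _ t ht
  · set n := 1 / (m - 1) with hn
    have hn0 : 0 < n := by positivity
    have hym : 0 < y / m := by positivity
    set g := (y / m) ^ (n + 1) with hg
    have hg0 : 0 < g := rpow_pos_of_pos hym _
    have hG : limG m M y = max (M - (m - 1) * g) 0 := by
      rw [limG, max_eq_left hy.le]
    rw [hG]
    refine tendsto_order.2 ⟨fun a ha => ?_, fun a ha => ?_⟩
    · rcases lt_max_iff.1 ha with ha | ha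
      · set d := M - (m - 1) * g - a with hd
        have hd0 : 0 < d := by rw [hd]; linarith
        set b := 1 + d / (4 * (m - 1) * g) with hb
        have hb1 : 1 < b := by
          have : 0 < d / (4 * (m - 1) * g) := by positivity
          linarith
        obtain ⟨S, hS0, hS1, hS2⟩ := exists_S hm hb1
        obtain ⟨z, hz⟩ := eventually_atBot.1
          (h.Q0_bot.eventually (lt_mem_nhds (show M - d / 4 < M by linarith)))
        have hlim : Tendsto (fun t : ℝ => M - d / 4 - b * (m - 1) *
            (max (y + (S - z) * t ^ (-(1 / m))) 0 / m) ^ (n + 1)) atTop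
            (𝓝 (M - d / 4 - b * (m - 1) * (max (y + (S - z) * 0) 0 / m) ^ (n + 1))) := by
          refine Tendsto.const_sub _ (Tendsto.const_mul _ (Tendsto.rpow_const ?_
            (Or.inr (by positivity))))
          exact (((hτ.const_mul (S - z)).const_add y).max tendsto_const_nhds).div_const m
        have hval : a < M - d / 4 - b * (m - 1) * (max (y + (S - z) * 0) 0 / m) ^ (n + 1) := by
          rw [mul_zero, add_zero, max_eq_left hy.le, ← hg]
          have : b * (m - 1) * g = (m - 1) * g + d / 4 := by
            rw [hb]; field_simp
          rw [this]; linarith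
        filter_upwards [hlim.eventually (lt_mem_nhds hval), eventually_gt_atTop 0] with t h1 ht
        refine h1.trans_le ?_
        have h2 := h.lower hm hb1 (by positivity : 0 ≤ d / 4) (fun s hs => (hz s hs).le) hS0 hS1 hS2
          (y * t ^ (1 / m)) t ht
        refine le_trans (le_of_eq ?_) h2
        congr 2
        have hL : 0 < t ^ (1 / m) := rpow_pos_of_pos ht _
        have hL' := rpow_inv_mul_self hm ht
        have e1 : max (y * t ^ (1 / m) - z + S) 0
            = t ^ (1 / m) * max (y + (S - z) * t ^ (-(1 / m))) 0 := by
          rw [mul_max_of_nonneg _ _ hL.le, mul_zero]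
          congr 1
          linear_combination (-(S - z)) * hL'
        have e2 : t ^ (1 / m) * max (y + (S - z) * t ^ (-(1 / m))) 0 / (m * t)
            = (t ^ (1 / m) / t) * (max (y + (S - z) * t ^ (-(1 / m))) 0 / m) := by
          field_simp
        rw [e1, e2, mul_rpow (by positivity) (by positivity), ← mul_assoc]
        have e3 : t * (t ^ (1 / m) / t) ^ (n + 1) = 1 := by
          have e4 : t ^ (1 / m) / t = t ^ (1 / m - 1) := (rpow_sub_one ht.ne' _).symm
          have e5 : (1 / m - 1) * (n + 1) = -1 := by
            rw [hn]; field_simp; ring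
          rw [e4, ← rpow_mul ht.le, e5, rpow_neg_one, mul_inv_cancel₀ ht.ne']
        rw [e3, one_mul]
      · filter_upwards [eventually_gt_atTop 0] with t ht
        exact ha.trans_le (h.nonneg _ t ht)
    · set d := a - max (M - (m - 1) * g) 0 with hd
      have hd0 : 0 < d := by rw [hd]; linarith
      set q := (y / m) ^ n with hq
      have hq0 : 0 < q := rpow_pos_of_pos hym _
      have hqm : q ^ m = g := by
        rw [hq, hg, ← rpow_mul hym.le]; congr 1; rw [hn]; field_simp; ring
      have hqy : q * y = m * g := by
        rw [hg, rpow_add_one hym.ne', ← hq]; field_simp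
      obtain ⟨s₁, hs₁⟩ := eventually_atTop.1
          (h.Q0_top.eventually (gt_mem_nhds (show 0 < d / 2 by linarith)))
      have hlim : Tendsto (fun t : ℝ => d / 2 + q * t ^ (-(1 / m)) * (Real.log 2 / ((m - 1) / m))
          + max (M + q * t ^ (-(1 / m)) * s₁ + q ^ m - q * y) 0) atTop
          (𝓝 (d / 2 + q * 0 * (Real.log 2 / ((m - 1) / m))
          + max (M + q * 0 * s₁ + q ^ m - q * y) 0)) := by
        refine Tendsto.add (((hτ.const_mul q).mul_const _).const_add _) (Tendsto.max ?_
          tendsto_const_nhds)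
        exact ((((hτ.const_mul q).mul_const s₁).const_add M).add_const _).sub_const _
      have hval : d / 2 + q * 0 * (Real.log 2 / ((m - 1) / m))
          + max (M + q * 0 * s₁ + q ^ m - q * y) 0 < a := by
        have : M + q * 0 * s₁ + q ^ m - q * y = M - (m - 1) * g := by
          rw [hqm, hqy]; ring
        rw [this]
        simp only [mul_zero, zero_mul, add_zero]
        linarith
      filter_upwards [hlim.eventually (gt_mem_nhds hval), eventually_gt_atTop 0] with t h1 ht
      refine lt_of_le_of_lt ?_ h1
      have hp : 0 < q * t ^ (-(1 / m)) := mul_pos hq0 (rpow_pos_of_pos ht _)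
      have h2 := h.upper hm hp (by positivity : 0 ≤ d / 2) (fun s hs => (hs₁ s hs).le)
        (y * t ^ (1 / m)) t ht
      refine h2.trans (le_of_eq ?_)
      have hL' := rpow_inv_mul_self hm ht
      have e1 : (q * t ^ (-(1 / m))) ^ m * t = q ^ m := by
        rw [mul_rpow hq0.le (rpow_pos_of_pos ht _).le, ← rpow_mul ht.le]
        have : -(1 / m) * m = -1 := by field_simp
        rw [this, rpow_neg_one]; field_simp
      have e2 : q * t ^ (-(1 / m)) * (y * t ^ (1 / m)) = q * y := by
        linear_combination (q * y) * hL'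
      rw [e1, e2]

/-- Secant inequalities from convexity in `t ^ (-1/(m-1))`. -/
lemma IsPot.secant {m M : ℝ} (hm : 1 < m) {W Q Qs : ℝ → ℝ → ℝ} {Q0 : ℝ → ℝ}
    (h : IsPot m M W Q Qs Q0) (s t c : ℝ) (ht : 0 < t) (hc : 0 < c) :
    (m - 1) * (1 - c) * (t * W s t ^ m) ≤ Q s (t * c ^ (-(m - 1))) - Q s t := by
  have hm1 : 0 < m - 1 := by linarith
  set x := t ^ (-(1 / (m - 1))) with hx
  have hx0 : 0 < x := rpow_pos_of_pos ht _
  have hxt : x ^ (-(m - 1)) = t := by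
    rw [hx, ← rpow_mul ht.le]
    have : -(1 / (m - 1)) * -(m - 1) = 1 := by field_simp
    rw [this, rpow_one]
  have hxc : (c * x) ^ (-(m - 1)) = t * c ^ (-(m - 1)) := by
    rw [mul_rpow hc.le hx0.le, hxt, mul_comm]
  have hconv := h.convex hm s
  have hd : HasDerivAt (fun x : ℝ => Q s (x ^ (-(m - 1))))
      (-(W s t ^ m * ((m - 1) * (t / x)))) x := by
    have e1 := h.der_t s (x ^ (-(m - 1))) (by rw [hxt]; exact ht)
    have e2 := Real.hasDerivAt_rpow_const (x := x) (p := -(m - 1)) (Or.inl hx0.ne')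
    have e3 := e1.comp x e2
    refine e3.congr_deriv ?_
    rw [rpow_sub_one hx0.ne', hxt]; ring
  have hcx : 0 < c * x := by positivity
  have key : -(W s t ^ m * ((m - 1) * (t / x))) * (c * x - x)
      ≤ Q s ((c * x) ^ (-(m - 1))) - Q s (x ^ (-(m - 1))) := by
    rcases lt_trichotomy (c * x) x with hlt | heq | hgt
    · have := hconv.slope_le_of_hasDerivAt (x := c * x) (y := x) hcx hx0 hlt hd
      rw [slope_def_field, div_le_iff₀ (by linarith)] at this
      linarith
    · rw [heq]; simp
    · have := hconv.le_slope_of_hasDerivAt (x := x) (y := c * x) hx0 hcx hgt hd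
      rw [slope_def_field, le_div_iff₀ (by linarith)] at this
      exact this
  rw [hxc, hxt] at key
  refine le_trans (le_of_eq ?_) key
  field_simp
  ring

lemma IsPot.tendsto_Q' {m M : ℝ} (hm : 1 < m) {W Q Qs : ℝ → ℝ → ℝ} {Q0 : ℝ → ℝ}
    (h : IsPot m M W Q Qs Q0) {y c : ℝ} (hy : y ≠ 0) (hc : 0 < c) :
    Tendsto (fun t => Q (y * t ^ (1 / m)) (t * c ^ (-(m - 1)))) atTop
      (𝓝 (max (M - c * ((m - 1) * (max y 0 / m) ^ (1 / (m - 1) + 1))) 0)) := by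
  have hm0 : 0 < m := by linarith
  have hm1 : 0 < m - 1 := by linarith
  set r := c ^ ((m - 1) / m) with hr
  have hr0 : 0 < r := rpow_pos_of_pos hc _
  have h1 := h.tendsto_Q hm (y := y * r) (mul_ne_zero hy hr0.ne')
  have hcp : 0 < c ^ (-(m - 1)) := rpow_pos_of_pos hc _
  have h2 : Tendsto (fun t : ℝ => t * c ^ (-(m - 1))) atTop atTop :=
    tendsto_id.atTop_mul_const hcp
  have h3 := h1.comp h2
  have hG : limG m M (y * r) = max (M - c * ((m - 1) * (max y 0 / m) ^ (1 / (m - 1) + 1))) 0 := by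
    rw [limG]
    have e1 : max (y * r) 0 = max y 0 * r := by
      rw [max_mul_of_nonneg _ _ hr0.le, zero_mul]
    have e2 : max y 0 * r / m = r * (max y 0 / m) := by ring
    have e3 : r ^ (1 / (m - 1) + 1) = c := by
      rw [hr, ← rpow_mul hc.le]
      have : (m - 1) / m * (1 / (m - 1) + 1) = 1 := by field_simp; ring
      rw [this, rpow_one]
    rw [e1, e2, mul_rpow hr0.le (by positivity), e3]
    ring_nf
  rw [← hG]
  refine h3.congr' ?_
  filter_upwards [eventually_gt_atTop 0] with t ht
  simp only [Function.comp]
  congr 1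
  rw [mul_rpow ht.le hcp.le, ← rpow_mul hc.le, hr]
  have : c ^ ((m - 1) / m) * c ^ (-(m - 1) * (1 / m)) = 1 := by
    rw [← rpow_add hc]
    have : (m - 1) / m + -(m - 1) * (1 / m) = 0 := by ring
    rw [this, rpow_zero]
  linear_combination (y * t ^ (1 / m)) * this

lemma IsPot.tendsto_W {m M k : ℝ} (hm : 1 < m) {W Q Qs : ℝ → ℝ → ℝ} {Q0 : ℝ → ℝ}
    (h : IsPot m M W Q Qs Q0) (hk : 0 < k) (hkM : (m - 1) * (k / m) ^ (1 / (m - 1) + 1) = M)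
    {y : ℝ} (hy : y ≠ 0) (hyk : y ≠ k) :
    Tendsto (fun t => t ^ (1 / m) * W (y * t ^ (1 / m)) t) atTop (𝓝 (limg m k y)) := by
  have hm0 : 0 < m := by linarith
  have hm1 : 0 < m - 1 := by linarith
  have hM := h.M_nonneg
  have hn0 : 0 < 1 / (m - 1) := by positivity
  set E := (m - 1) * (max y 0 / m) ^ (1 / (m - 1) + 1) with hE
  have hE0 : 0 ≤ E := by positivity
  have hg0 : 0 ≤ limg m k y := by
    rw [limg]; split_ifs <;> positivity
  obtain ⟨η, hη0, hη1, ha, hb⟩ : ∃ η : ℝ, 0 < η ∧ η < 1 ∧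
      max (M - (1 - η) * E) 0 - max (M - E) 0 = (m - 1) * η * limg m k y ^ m ∧
      max (M - (1 + η) * E) 0 - max (M - E) 0 = -((m - 1) * η * limg m k y ^ m) := by
    rcases lt_or_gt_of_ne hy with hy0 | hy0
    · have hE' : E = 0 := by
        rw [hE, max_eq_right hy0.le, zero_div, zero_rpow (by positivity), mul_zero]
      have hg : limg m k y = 0 := by
        rw [limg, if_pos (by linarith), max_eq_right (div_nonpos_of_nonpos_of_nonneg hy0.le hm0.le),
          zero_rpow hn0.ne']
      refine ⟨1 / 2, by norm_num, by norm_num, ?_, ?_⟩ <;>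
        rw [hE', hg, zero_rpow hm0.ne'] <;> simp
    · have hE1 : E = (m - 1) * (y / m) ^ (1 / (m - 1) + 1) := by rw [hE, max_eq_left hy0.le]
      have hEpos : 0 < E := by rw [hE1]; positivity
      rcases lt_or_gt_of_ne hyk with hlt | hgt
      · have hEM : E < M := by
          rw [hE1, ← hkM]
          apply mul_lt_mul_of_pos_left _ hm1
          apply rpow_lt_rpow (by positivity) _ (by positivity)
          gcongr
        have hg : (m - 1) * limg m k y ^ m = E := by
          rw [limg, if_pos hlt, max_eq_left (by positivity), hE1, ← rpow_mul (by positivity)]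
          congr 2; field_simp; ring
        set η := min (1 / 2) ((M - E) / E) with hη
        have hη0 : 0 < η := lt_min (by norm_num) (div_pos (by linarith) hEpos)
        have hη1 : η ≤ 1 / 2 := min_le_left _ _
        have hη2 : η * E ≤ M - E := by
          have : η ≤ (M - E) / E := min_le_right _ _
          rwa [le_div_iff₀ hEpos] at this
        have hηE : 0 < η * E := by positivity
        refine ⟨η, hη0, by linarith, ?_, ?_⟩
        · rw [max_eq_left (by nlinarith), max_eq_left (by linarith)]
          linear_combination (-η) * hg
        · rw [max_eq_left (by nlinarith), max_eq_left (by linarith)]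
          linear_combination (η) * hg
      · have hEM : M < E := by
          rw [hE1, ← hkM]
          apply mul_lt_mul_of_pos_left _ hm1
          apply rpow_lt_rpow (by positivity) _ (by positivity)
          gcongr
        have hg : limg m k y = 0 := by
          rw [limg, if_neg (by linarith)]
        set η := min (1 / 2) ((E - M) / E) with hη
        have hη0 : 0 < η := lt_min (by norm_num) (div_pos (by linarith) hEpos)
        have hη1 : η ≤ 1 / 2 := min_le_left _ _
        have hη2 : η * E ≤ E - M := by
          have : η ≤ (E - M) / E := min_le_right _ _
          rwa [le_div_iff₀ hEpos] at this
        have hηE : 0 < η * E := by positivity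
        refine ⟨η, hη0, by linarith, ?_, ?_⟩
        · rw [max_eq_right (by nlinarith), max_eq_right (by linarith), hg, zero_rpow hm0.ne']
          ring
        · rw [max_eq_right (by nlinarith), max_eq_right (by linarith), hg, zero_rpow hm0.ne']
          ring
  have h0 := h.tendsto_Q hm hy
  have hG : limG m M y = max (M - E) 0 := rfl
  rw [hG] at h0
  have h1 := (h.tendsto_Q' hm hy (show 0 < 1 - η by linarith)).sub h0
  have h2 := (h.tendsto_Q' hm hy (show 0 < 1 + η by linarith)).sub h0
  rw [← hE] at h1 h2
  rw [ha] at h1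
  rw [hb] at h2
  have hmη : 0 < (m - 1) * η := by positivity
  have h3 := h1.div_const ((m - 1) * η)
  have h4 := h2.neg.div_const ((m - 1) * η)
  rw [neg_neg] at h4
  rw [mul_div_cancel_left₀ _ hmη.ne'] at h3 h4
  have h5 : Tendsto (fun t => t * W (y * t ^ (1 / m)) t ^ m) atTop (𝓝 (limg m k y ^ m)) := by
    refine tendsto_of_tendsto_of_tendsto_of_le_of_le' h4 h3 ?_ ?_
    · filter_upwards [eventually_gt_atTop 0] with t ht
      have := h.secant hm (y * t ^ (1 / m)) t (1 + η) ht (by linarith)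
      rw [div_le_iff₀ hmη]
      linarith
    · filter_upwards [eventually_gt_atTop 0] with t ht
      have := h.secant hm (y * t ^ (1 / m)) t (1 - η) ht (by linarith)
      rw [le_div_iff₀ hmη]
      linarith
  have h6 := h5.rpow_const (p := 1 / m) (Or.inr (by positivity))
  rw [← rpow_mul hg0, mul_one_div_cancel hm0.ne', rpow_one] at h6
  refine h6.congr' ?_
  filter_upwards [eventually_gt_atTop 0] with t ht
  have hW := h.W_nonneg (y * t ^ (1 / m)) t
  rw [mul_rpow ht.le (rpow_nonneg hW _), ← rpow_mul hW, mul_one_div_cancel hm0.ne', rpow_one]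

lemma IsPot.W_le {m M : ℝ} (hm : 1 < m) {W Q Qs : ℝ → ℝ → ℝ} {Q0 : ℝ → ℝ}
    (h : IsPot m M W Q Qs Q0) (s t : ℝ) (ht : 0 < t) :
    t ^ (1 / m) * W s t ≤ (2 * M / (m - 1)) ^ (1 / m) := by
  have hm0 : 0 < m := by linarith
  have hm1 : 0 < m - 1 := by linarith
  have h1 := h.secant hm s t (1 / 2) ht (by norm_num)
  have h2 := h.le_M hm s (t * (1 / 2) ^ (-(m - 1))) (by positivity)
  have h3 := h.nonneg s t ht
  have hW := h.W_nonneg s t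
  have h4 : t * W s t ^ m ≤ 2 * M / (m - 1) := by
    rw [le_div_iff₀ hm1]; linarith
  have h5 := rpow_le_rpow (by positivity) h4 (show 0 ≤ 1 / m by positivity)
  rwa [mul_rpow ht.le (rpow_nonneg hW _), ← rpow_mul hW, mul_one_div_cancel hm0.ne', rpow_one] at h5

lemma IsPot.Qs_nonpos {m M : ℝ} (hm : 1 < m) {W Q Qs : ℝ → ℝ → ℝ} {Q0 : ℝ → ℝ}
    (h : IsPot m M W Q Qs Q0) (b t : ℝ) (ht : 0 < t) : Qs b t ≤ 0 := by
  by_contra hpos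
  push Not at hpos
  have h1 : Monotone (fun s => exp (-s) * Qs s t) := by
    apply monotone_of_hasDerivAt_nonneg (f' := fun s => exp (-s) * W s t)
    · intro s
      have e1 : HasDerivAt (fun s => exp (-s)) (exp (-s) * (-1)) s :=
        ((hasDerivAt_id s).neg).exp
      exact (e1.mul (h.der_ss s t ht)).congr_deriv (by ring)
    · intro s
      exact mul_nonneg (exp_pos _).le (h.W_nonneg s t)
  have h2 : ∀ s, b ≤ s → Qs b t ≤ Qs s t := by
    intro s hs
    have e1 : exp (-b) * Qs b t ≤ exp (-s) * Qs s t := h1 hs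
    have e2 : exp (-s) ≤ exp (-b) := exp_le_exp.2 (by linarith)
    have e3 : exp (-s) * Qs b t ≤ exp (-b) * Qs b t := mul_le_mul_of_nonneg_right e2 hpos.le
    exact le_of_mul_le_mul_left (e3.trans e1) (exp_pos _)
  set L := (M + 1) / Qs b t with hL
  have hM := h.M_nonneg
  have hL0 : 0 < L := by positivity
  obtain ⟨z, hz, hz'⟩ := exists_hasDerivAt_eq_slope (fun σ => Q σ t) (fun σ => Qs σ t)
    (show b < b + L by linarith) (fun x _ => (h.der_s x t ht).continuousAt.continuousWithinAt)
    (fun x _ => h.der_s x t ht)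
  have e1 := h2 z hz.1.le
  have e2 := h.le_M hm (b + L) t ht
  have e3 := h.nonneg b t ht
  rw [hz'] at e1
  rw [show b + L - b = L by ring, le_div_iff₀ hL0, hL, mul_div_cancel₀ _ hpos.ne'] at e1
  linarith

lemma IsPot.sub_le {m M : ℝ} (hm : 1 < m) {W Q Qs : ℝ → ℝ → ℝ} {Q0 : ℝ → ℝ}
    (h : IsPot m M W Q Qs Q0) (a t : ℝ) (ht : 0 < t) : Q a t - Qs a t ≤ M := by
  by_contra hpos
  push Not at hpos
  have h1 : Monotone (fun s => Qs s t - Q s t) := by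
    apply monotone_of_hasDerivAt_nonneg (f' := fun s => W s t)
    · intro s
      exact ((h.der_ss s t ht).sub (h.der_s s t ht)).congr_deriv (by ring)
    · intro s
      exact h.W_nonneg s t
  set N := Q a t - Qs a t - M with hN
  have hN0 : 0 < N := by rw [hN]; linarith
  have h2 : ∀ s, s ≤ a → Qs s t ≤ -N := by
    intro s hs
    have e1 : Qs s t - Q s t ≤ Qs a t - Q a t := h1 hs
    have e2 := h.le_M hm s t ht
    rw [hN]; linarith
  have hM := h.M_nonneg
  set L := (M + 1) / N with hL
  have hL0 : 0 < L := by positivity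
  obtain ⟨z, hz, hz'⟩ := exists_hasDerivAt_eq_slope (fun σ => Q σ t) (fun σ => Qs σ t)
    (show a - L < a by linarith) (fun x _ => (h.der_s x t ht).continuousAt.continuousWithinAt)
    (fun x _ => h.der_s x t ht)
  have e1 := h2 z hz.2.le
  have e2 := h.le_M hm (a - L) t ht
  have e3 := h.nonneg a t ht
  rw [hz'] at e1
  rw [show a - (a - L) = L by ring, div_le_iff₀ hL0, hL, neg_mul, mul_div_cancel₀ _ hN0.ne'] at e1
  linarith

lemma IsPot.mass {m M : ℝ} (hm : 1 < m) {W Q Qs : ℝ → ℝ → ℝ} {Q0 : ℝ → ℝ}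
    (h : IsPot m M W Q Qs Q0) (t : ℝ) (ht : 0 < t) (hW : Continuous (fun s => W s t)) :
    Integrable (fun s => W s t) ∧ ∫ s, W s t ≤ M := by
  have h1 : ∀ a b : ℝ, ∫ s in a..b, W s t ≤ M := by
    intro a b
    rw [intervalIntegral.integral_eq_sub_of_hasDerivAt (f := fun s => Qs s t - Q s t)
      (fun s _ => ((h.der_ss s t ht).sub (h.der_s s t ht)).congr_deriv (by ring))
      (hW.intervalIntegrable _ _)]
    linarith [h.Qs_nonpos hm b t ht, h.sub_le hm a t ht, h.nonneg b t ht]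
  have h2 : Integrable (fun s => W s t) := by
    refine integrable_of_intervalIntegral_norm_bounded (l := atTop) (a := fun R : ℝ => -R)
      (b := fun R : ℝ => R) M
      (fun R => (hW.integrableOn_Ioc)) tendsto_neg_atTop_atBot tendsto_id ?_
    refine Eventually.of_forall fun R => ?_
    have : (fun s => ‖W s t‖) = fun s => W s t := by
      funext s; exact Real.norm_of_nonneg (h.W_nonneg s t)
    simp only [this]
    exact h1 _ _
  refine ⟨h2, ?_⟩
  have h3 := intervalIntegral_tendsto_integral (l := atTop) (a := fun R : ℝ => -R)
      (b := fun R : ℝ => R) h2 tendsto_neg_atTop_atBot tendsto_id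
  exact le_of_tendsto h3 (Eventually.of_forall fun R => h1 _ _)

/-- A Scheffé type lemma. -/
lemma scheffe {f : ℝ → ℝ → ℝ} {g : ℝ → ℝ} (hg : Integrable g) (hg0 : ∀ y, 0 ≤ g y)
    (hf0 : ∀ t y, 0 < t → 0 ≤ f t y) (hf : ∀ t, 0 < t → Integrable (f t))
    (hle : ∀ t, 0 < t → ∫ y, f t y ≤ ∫ y, g y)
    (hlim : ∀ᵐ y, Tendsto (fun t => f t y) atTop (𝓝 (g y))) :
    Tendsto (fun t => ∫ y, |f t y - g y|) atTop (𝓝 0) := by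
  have h1 : Tendsto (fun t => ∫ y, max (g y - f t y) 0) atTop (𝓝 (∫ _ : ℝ, (0 : ℝ))) := by
    refine tendsto_integral_filter_of_dominated_convergence g ?_ ?_ hg ?_
    · filter_upwards [eventually_gt_atTop 0] with t ht
      exact ((hg.sub (hf t ht)).pos_part).aestronglyMeasurable
    · filter_upwards [eventually_gt_atTop 0] with t ht
      refine Eventually.of_forall fun y => ?_
      rw [Real.norm_of_nonneg (le_max_right _ _)]
      exact max_le (by linarith [hf0 t y ht]) (hg0 y)
    · filter_upwards [hlim] with y hy
      have := (hy.const_sub (g y)).max (tendsto_const_nhds (x := (0:ℝ)))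
      simpa using this
  rw [integral_zero] at h1
  have h2 := h1.const_mul 2
  rw [mul_zero] at h2
  refine tendsto_of_tendsto_of_tendsto_of_le_of_le' tendsto_const_nhds h2 ?_ ?_
  · exact Eventually.of_forall fun t => integral_nonneg fun y => abs_nonneg _
  · filter_upwards [eventually_gt_atTop 0] with t ht
    have e1 : ∀ y, |f t y - g y| = (f t y - g y) + 2 * max (g y - f t y) 0 := by
      intro y
      rcases le_total (f t y) (g y) with h | h
      · rw [abs_of_nonpos (by linarith), max_eq_left (by linarith)]; ring
      · rw [abs_of_nonneg (by linarith), max_eq_right (by linarith)]; ring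
    have hp : Integrable (fun y => max (g y - f t y) 0) := (hg.sub (hf t ht)).pos_part
    have hfg : Integrable (fun y => f t y - g y) := (hf t ht).sub hg
    calc ∫ y, |f t y - g y| = ∫ y, ((f t y - g y) + 2 * max (g y - f t y) 0) := by
          simp only [e1]
      _ = (∫ y, (f t y - g y)) + ∫ y, 2 * max (g y - f t y) 0 :=
          integral_add hfg (hp.const_mul 2)
      _ = ((∫ y, f t y) - ∫ y, g y) + 2 * ∫ y, max (g y - f t y) 0 := by
          rw [integral_sub (hf t ht) hg, integral_const_mul]
      _ ≤ _ := by linarith [hle t ht]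

lemma limg_nonneg (m k y : ℝ) : 0 ≤ limg m k y := by
  rw [limg]; split_ifs <;> positivity

lemma limg_le {m k : ℝ} (hm : 1 < m) (hk : 0 < k) (y : ℝ) :
    limg m k y ≤ (k / m) ^ (1 / (m - 1)) := by
  have hm0 : 0 < m := by linarith
  have hm1 : 0 < m - 1 := by linarith
  rw [limg]
  split_ifs with h
  · apply rpow_le_rpow (le_max_right _ _) _ (by positivity)
    apply max_le _ (by positivity)
    gcongr
  · positivity

lemma limg_eq_indicator {m k : ℝ} (hm : 1 < m) :
    limg m k = (Ioo 0 k).indicator (fun y => (y / m) ^ (1 / (m - 1))) := by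
  have hm0 : 0 < m := by linarith
  have hm1 : 0 < m - 1 := by linarith
  have hn0 : 0 < 1 / (m - 1) := by positivity
  funext y
  rw [limg]
  by_cases h : y ∈ Ioo 0 k
  · have h0 : 0 < y := h.1
    rw [indicator_of_mem h, if_pos h.2, max_eq_left (by positivity)]
  · rw [indicator_of_notMem h]
    split_ifs with h'
    · have : y ≤ 0 := by
        by_contra h''
        push Not at h''
        exact h ⟨h'', h'⟩
      rw [max_eq_right (div_nonpos_of_nonpos_of_nonneg this hm0.le), zero_rpow hn0.ne']
    · rfl

lemma limg_integral {m k : ℝ} (hm : 1 < m) (hk : 0 < k) :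
    Integrable (limg m k) ∧ ∫ y, limg m k y = (m - 1) * (k / m) ^ (1 / (m - 1) + 1) := by
  have hm0 : 0 < m := by linarith
  have hm1 : 0 < m - 1 := by linarith
  have hn0 : 0 < 1 / (m - 1) := by positivity
  rw [limg_eq_indicator hm]
  have hc : Continuous (fun y : ℝ => (y / m) ^ (1 / (m - 1))) :=
    (continuous_id.div_const m).rpow_const (fun _ => Or.inr hn0.le)
  constructor
  · rw [integrable_indicator_iff measurableSet_Ioo]
    exact (hc.integrableOn_Icc).mono_set Ioo_subset_Icc_self
  · rw [integral_indicator measurableSet_Ioo, ← integral_Ioc_eq_integral_Ioo,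
      ← intervalIntegral.integral_of_le hk.le,
      intervalIntegral.integral_comp_div (fun y => y ^ (1 / (m - 1))) hm0.ne',
      integral_rpow (Or.inl (by linarith))]
    have : (0 : ℝ) ^ (1 / (m - 1) + 1) = 0 := zero_rpow (by positivity)
    rw [zero_div, this, sub_zero, smul_eq_mul]
    have e : 1 / (m - 1) + 1 = m / (m - 1) := by field_simp; ring
    rw [e]
    field_simp

lemma IsPot.tendsto_Lp {m M k : ℝ} (hm : 1 < m) {W Q Qs : ℝ → ℝ → ℝ} {Q0 : ℝ → ℝ}
    (h : IsPot m M W Q Qs Q0) (hk : 0 < k) (hkM : (m - 1) * (k / m) ^ (1 / (m - 1) + 1) = M)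
    (hW : ∀ t, 0 < t → Continuous (fun s => W s t)) {p : ℝ} (hp : 1 ≤ p) :
    Tendsto (fun t => ∫ y, |t ^ (1 / m) * W (y * t ^ (1 / m)) t - limg m k y| ^ p) atTop
      (𝓝 0) := by
  have hm0 : 0 < m := by linarith
  have hm1 : 0 < m - 1 := by linarith
  obtain ⟨hgi, hgM⟩ := limg_integral hm hk
  have hfi : ∀ t, 0 < t → Integrable (fun y => t ^ (1 / m) * W (y * t ^ (1 / m)) t) := by
    intro t ht
    have hL : t ^ (1 / m) ≠ 0 := (rpow_pos_of_pos ht _).ne'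
    exact (((h.mass hm t ht (hW t ht)).1).comp_mul_right' hL).const_mul _
  have h1 : Tendsto (fun t => ∫ y, |t ^ (1 / m) * W (y * t ^ (1 / m)) t - limg m k y|) atTop
      (𝓝 0) := by
    refine scheffe (f := fun t y => t ^ (1 / m) * W (y * t ^ (1 / m)) t) hgi
      (limg_nonneg m k) ?_ hfi ?_ ?_
    · intro t y ht
      exact mul_nonneg (rpow_nonneg ht.le _) (h.W_nonneg _ _)
    · intro t ht
      have hL : 0 < t ^ (1 / m) := rpow_pos_of_pos ht _
      rw [integral_const_mul, Measure.integral_comp_mul_right (fun s => W s t), smul_eq_mul,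
        abs_of_pos (inv_pos.2 hL), mul_inv_cancel_left₀ hL.ne', hgM, hkM]
      exact (h.mass hm t ht (hW t ht)).2
    · have hn : ∀ᵐ y : ℝ, y ∉ ({0, k} : Set ℝ) := by
        have : volume ({0, k} : Set ℝ) = 0 := (Set.toFinite _).measure_zero _
        exact measure_eq_zero_iff_ae_notMem.1 this
      filter_upwards [hn] with y hy
      simp only [mem_insert_iff, mem_singleton_iff, not_or] at hy
      exact h.tendsto_W hm hk hkM hy.1 hy.2
  set C := max ((2 * M / (m - 1)) ^ (1 / m)) ((k / m) ^ (1 / (m - 1))) with hC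
  have h2 := h1.const_mul (C ^ (p - 1))
  rw [mul_zero] at h2
  refine tendsto_of_tendsto_of_tendsto_of_le_of_le' tendsto_const_nhds h2 ?_ ?_
  · exact Eventually.of_forall fun t => integral_nonneg fun y => rpow_nonneg (abs_nonneg _) _
  · filter_upwards [eventually_gt_atTop 0] with t ht
    rw [← integral_const_mul]
    refine integral_mono_of_nonneg (Eventually.of_forall fun y => rpow_nonneg (abs_nonneg _) _)
      ((((hfi t ht).sub hgi).abs).const_mul _) (Eventually.of_forall fun y => ?_)
    simp only
    have e1 : t ^ (1 / m) * W (y * t ^ (1 / m)) t ≤ C :=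
      (h.W_le hm _ t ht).trans (le_max_left _ _)
    have e2 : limg m k y ≤ C := (limg_le hm hk y).trans (le_max_right _ _)
    have e3 : 0 ≤ t ^ (1 / m) * W (y * t ^ (1 / m)) t :=
      mul_nonneg (rpow_nonneg ht.le _) (h.W_nonneg _ _)
    have e4 := limg_nonneg m k y
    set x := |t ^ (1 / m) * W (y * t ^ (1 / m)) t - limg m k y| with hx
    have hx0 : 0 ≤ x := abs_nonneg _
    have hxC : x ≤ C := by rw [hx, abs_le]; constructor <;> linarith
    rcases eq_or_lt_of_le hx0 with h0 | h0
    · rw [← h0, zero_rpow (by linarith), mul_zero]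
    · have e5 : x ^ p = x ^ (p - 1) * x := by
        rw [rpow_sub_one h0.ne']; field_simp
      rw [e5]
      exact mul_le_mul_of_nonneg_right (rpow_le_rpow hx0 hxC (by linarith)) hx0
theorem affine_of_weak {R : ℝ → ℝ} (hR : Continuous R) {a b : ℝ}
    (h : ∀ φ : ℝ → ℝ, ContDiff ℝ 2 φ → (∀ x, 0 ≤ φ x) → HasCompactSupport φ →
      tsupport φ ⊆ Ioo a b → ∫ x, deriv (deriv φ) x * R x = 0)
    (c d : ℝ) (hac : a < c) (hcd : c < d) (hdb : d < b) :
    ∀ x ∈ Icc c d, R x = R c + (x - c) / (d - c) * (R d - R c) := by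
  intro x hx
  let B : ℕ → ContDiffBump (0 : ℝ) := fun n =>
    ⟨1 / ((n : ℝ) + 1) / 2, 1 / ((n : ℝ) + 1), by positivity, by
      have : (0:ℝ) < 1 / ((n : ℝ) + 1) := by positivity
      linarith⟩
  have hlim : Tendsto (fun n => (B n).rOut) atTop (𝓝 0) :=
    tendsto_one_div_add_atTop_nhds_zero_nat
  have hc := ContDiffBump.convolution_tendsto_right_of_continuous (μ := volume) hlim hR
  set f : ℕ → ℝ → ℝ := fun n => convolution ((B n).normed volume) R
    (ContinuousLinearMap.lsmul ℝ ℝ) volume with hf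
  have hev : ∀ᶠ n in atTop, f n x = f n c + (x - c) / (d - c) * (f n d - f n c) := by
    have hpos : 0 < min (c - a) (b - d) := lt_min (by linarith) (by linarith)
    filter_upwards [hlim.eventually (gt_mem_nhds hpos)] with n hn
    have h1 := lt_of_lt_of_le hn (min_le_left _ _)
    have h2 := lt_of_lt_of_le hn (min_le_right _ _)
    set ψ := (B n).normed (volume : Measure ℝ) with hψ
    have hψs : ContDiff ℝ 2 ψ := (B n).contDiff_normed (n := 2)
    have hψc : HasCompactSupport ψ := (B n).hasCompactSupport_normed
    have hψ1 : ContDiff ℝ 1 (deriv ψ) := by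
      have : ContDiff ℝ (1 + 1) ψ := by
        convert hψs using 1
        norm_num
      exact (contDiff_succ_iff_deriv.1 this).2.2
    have hli := hR.locallyIntegrable (μ := volume)
    have hd0 := fun y => hψc.hasDerivAt_convolution_left (ContinuousLinearMap.lsmul ℝ ℝ)
      (hψs.of_le (by norm_num)) hli y
    have hd1 := fun y => hψc.deriv.hasDerivAt_convolution_left (ContinuousLinearMap.lsmul ℝ ℝ)
      hψ1 hli y
    have hzero : ∀ y ∈ Icc c d, convolution (deriv (deriv ψ)) R
        (ContinuousLinearMap.lsmul ℝ ℝ) volume y = 0 := by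
      intro y hy
      rw [convolution_lsmul_swap]
      have hts : tsupport (fun z => ψ (y - z)) ⊆ Metric.closedBall y (B n).rOut := by
        refine closure_minimal ?_ Metric.isClosed_closedBall
        intro z hz
        have : y - z ∈ Function.support ψ := hz
        rw [hψ, (B n).support_normed_eq] at this
        simp only [Metric.mem_ball, Metric.mem_closedBall, Real.dist_eq] at this ⊢
        rw [sub_zero, abs_sub_comm] at this
        exact this.le
      have key := h (fun z => ψ (y - z)) (hψs.comp (contDiff_const.sub contDiff_id))
        (fun z => (B n).nonneg_normed _)
        (HasCompactSupport.of_support_subset_isCompact (isCompact_closedBall y (B n).rOut)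
          ((subset_tsupport _).trans hts))
        (by
          refine hts.trans ?_
          intro z hz
          rw [Real.closedBall_eq_Icc] at hz
          exact ⟨by linarith [hz.1, hy.1], by linarith [hz.2, hy.2]⟩)
      rw [← key]
      congr 1
      ext z
      have e1 : deriv (fun z => ψ (y - z)) = fun z => - deriv ψ (y - z) := by
        ext z; exact deriv_comp_const_sub (f := ψ) y z
      have e2 : deriv (fun z => - deriv ψ (y - z)) z = deriv (deriv ψ) (y - z) := by
        rw [deriv.fun_neg, deriv_comp_const_sub (f := deriv ψ) y z, neg_neg]
      rw [e1, e2]; rfl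
    set f1 := convolution (deriv ψ) R (ContinuousLinearMap.lsmul ℝ ℝ) volume with hf1
    have hconst : ∀ y ∈ Icc c d, f1 y = f1 c := by
      apply constant_of_has_deriv_right_zero
      · exact fun y _ => (hd1 y).continuousAt.continuousWithinAt
      · intro y hy
        have := hd1 y
        rw [hzero y ⟨hy.1, hy.2.le⟩] at this
        exact this.hasDerivWithinAt
    have hconst2 : ∀ y ∈ Icc c d, f n y - f1 c * y = f n c - f1 c * c := by
      apply constant_of_has_deriv_right_zero (f := fun y => f n y - f1 c * y)
      · exact fun y _ => ((hd0 y).continuousAt.sub (by fun_prop)).continuousWithinAt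
      · intro y hy
        have h3 := (hd0 y).sub ((hasDerivAt_id y).const_mul (f1 c))
        refine (h3.congr_deriv ?_).hasDerivWithinAt
        rw [hconst y ⟨hy.1, hy.2.le⟩]; ring
    have k1 := hconst2 x hx
    have k2 := hconst2 d ⟨hcd.le, le_rfl⟩
    have hne : d - c ≠ 0 := by linarith
    have k3 : f n d - f n c = f1 c * (d - c) := by linarith
    rw [k3]
    field_simp
    linarith
  refine tendsto_nhds_unique_of_eventuallyEq (hc x) ?_ hev
  exact (hc c).add (((hc d).sub (hc c)).const_mul _)

theorem int_by_parts_support {φ G G' : ℝ → ℝ} (hφ : ContDiff ℝ 1 φ)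
    (hs : HasCompactSupport φ) (hG : ∀ x, HasDerivAt G (G' x) x) (hG' : Continuous G') :
    ∫ x, deriv φ x * G x = - ∫ x, φ x * G' x := by
  have hdc : Continuous (deriv φ) := hφ.continuous_deriv (by norm_num)
  have hGc : Continuous G := continuous_iff_continuousAt.2 fun x => (hG x).continuousAt
  have := integral_mul_deriv_eq_deriv_mul_of_integrable (u := φ) (v := G) (u' := deriv φ)
    (v' := G')
    (fun x _ => (hφ.differentiable (by norm_num) x).hasDerivAt)
    (fun x _ => hG x)
    ((hφ.continuous.mul hG').integrable_of_hasCompactSupport hs.mul_right)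
    ((hdc.mul hGc).integrable_of_hasCompactSupport hs.deriv.mul_right)
    ((hφ.continuous.mul hGc).integrable_of_hasCompactSupport hs.mul_right)
  rw [this, neg_neg]

theorem weyl0 {P g : ℝ → ℝ} (hP : Continuous P) (hg : Continuous g) {a b : ℝ}
    (h : ∀ φ : ℝ → ℝ, ContDiff ℝ 2 φ → (∀ x, 0 ≤ φ x) → HasCompactSupport φ →
      tsupport φ ⊆ Ioo a b → ∫ x, deriv (deriv φ) x * P x = ∫ x, φ x * g x) :
    ∀ x ∈ Ioo a b, HasDerivAt P (deriv P x) x ∧ HasDerivAt (deriv P) (g x) x := by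
  set G1 : ℝ → ℝ := fun x => ∫ y in a..x, g y with hG1
  have hd1 : ∀ x, HasDerivAt G1 (g x) x := fun x =>
    intervalIntegral.integral_hasDerivAt_right (hg.intervalIntegrable _ _)
      (hg.stronglyMeasurableAtFilter _ _) hg.continuousAt
  have hG1c : Continuous G1 := continuous_iff_continuousAt.2 fun x => (hd1 x).continuousAt
  set G2 : ℝ → ℝ := fun x => ∫ y in a..x, G1 y with hG2
  have hd2 : ∀ x, HasDerivAt G2 (G1 x) x := fun x =>
    intervalIntegral.integral_hasDerivAt_right (hG1c.intervalIntegrable _ _)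
      (hG1c.stronglyMeasurableAtFilter _ _) hG1c.continuousAt
  have hG2c : Continuous G2 := continuous_iff_continuousAt.2 fun x => (hd2 x).continuousAt
  have hR := affine_of_weak (R := fun x => P x - G2 x) (hP.sub hG2c) (a := a) (b := b) (by
    intro φ hφ h0 hs ht
    have hφ1 : ContDiff ℝ 1 (deriv φ) := by
      have : ContDiff ℝ (1 + 1) φ := by
        convert hφ using 1
        norm_num
      exact (contDiff_succ_iff_deriv.1 this).2.2
    have hdc : Continuous (deriv (deriv φ)) := hφ1.continuous_deriv (by norm_num)
    have i1 := int_by_parts_support hφ1 hs.deriv hd2 hG1c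
    have i2 := int_by_parts_support (hφ.of_le (by norm_num)) hs hd1 hg
    rw [i2, neg_neg, ← h φ hφ h0 hs ht] at i1
    simp only [mul_sub]
    rw [integral_sub, i1, sub_self]
    · exact (hdc.mul hP).integrable_of_hasCompactSupport hs.deriv.deriv.mul_right
    · exact (hdc.mul hG2c).integrable_of_hasCompactSupport hs.deriv.deriv.mul_right)
  intro x hx
  obtain ⟨c, hac, hcx⟩ := exists_between hx.1
  obtain ⟨d, hxd, hdb⟩ := exists_between hx.2
  have hR' := hR c d hac (hcx.trans hxd) hdb
  set κ := (P d - G2 d - (P c - G2 c)) / (d - c) with hκ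
  have hP' : ∀ y ∈ Ioo c d, HasDerivAt P (G1 y + κ) y := by
    intro y hy
    have h1 : HasDerivAt (fun z => G2 z + ((P c - G2 c) + (z - c) * κ)) (G1 y + κ) y := by
      refine ((hd2 y).add ((((hasDerivAt_id y).sub_const c).mul_const κ).const_add
        (P c - G2 c))).congr_deriv (by ring)
    refine h1.congr_of_eventuallyEq ?_
    filter_upwards [Ioo_mem_nhds hy.1 hy.2] with z hz
    have := hR' z ⟨hz.1.le, hz.2.le⟩
    rw [hκ]
    have e : (z - c) / (d - c) * (P d - G2 d - (P c - G2 c))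
      = (z - c) * ((P d - G2 d - (P c - G2 c)) / (d - c)) := by ring
    simp only [e] at this
    linarith
  have hxx := hP' x ⟨hcx, hxd⟩
  refine ⟨by rw [hxx.deriv]; exact hxx, ?_⟩
  refine ((hd1 x).add_const κ).congr_of_eventuallyEq ?_
  filter_upwards [Ioo_mem_nhds hcx hxd] with z hz
  exact (hP' z hz).deriv
theorem weyl1 {P g : ℝ → ℝ} (hP : ContinuousOn P (Ioi 0)) (hg : ContinuousOn g (Ioi 0))
    (h : ∀ (r₁ r₂ : ℝ) (φ : ℝ → ℝ), 0 < r₁ → r₁ < r₂ → ContDiff ℝ 2 φ → (∀ x, 0 ≤ φ x) →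
      HasCompactSupport φ → tsupport φ ⊆ Ioo r₁ r₂ →
      ∫ x in r₁..r₂, deriv (deriv φ) x * P x = ∫ x in r₁..r₂, φ x * g x) :
    ∀ x, 0 < x → HasDerivAt P (deriv P x) x ∧ HasDerivAt (deriv P) (g x) x := by
  intro x hx
  have h12 : x / 2 ≤ x + 1 := by linarith
  have hsub : Icc (x / 2) (x + 1) ⊆ Ioi 0 := fun y hy => lt_of_lt_of_le (by positivity) hy.1
  set Pe := IccExtend h12 ((Icc (x / 2) (x + 1)).domRestrict P) with hPe
  set ge := IccExtend h12 ((Icc (x / 2) (x + 1)).domRestrict g) with hge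
  have hPec : Continuous Pe := (continuousOn_iff_continuous_domRestrict.1 (hP.mono hsub)).Icc_extend'
  have hgec : Continuous ge := (continuousOn_iff_continuous_domRestrict.1 (hg.mono hsub)).Icc_extend'
  have eP : ∀ y ∈ Icc (x / 2) (x + 1), Pe y = P y := fun y hy => by
    rw [hPe, IccExtend_of_mem h12 _ hy]; rfl
  have eg : ∀ y ∈ Icc (x / 2) (x + 1), ge y = g y := fun y hy => by
    rw [hge, IccExtend_of_mem h12 _ hy]; rfl
  have key := weyl0 hPec hgec (a := x / 2) (b := x + 1) (by
    intro φ hφ h0 hs ht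
    have := h (x / 2) (x + 1) φ (by positivity) (by linarith) hφ h0 hs ht
    have s0 : Function.support φ ⊆ Ioc (x / 2) (x + 1) :=
      (subset_tsupport φ).trans (ht.trans Ioo_subset_Ioc_self)
    have s2 : Function.support (deriv (deriv φ)) ⊆ Ioc (x / 2) (x + 1) :=
      (support_deriv_subset).trans ((tsupport_deriv_subset).trans (ht.trans Ioo_subset_Ioc_self))
    rw [← intervalIntegral.integral_eq_integral_of_support_subset (a := x / 2) (b := x + 1)
        (f := fun y => deriv (deriv φ) y * Pe y)
        ((Function.support_mul_subset_left _ _).trans s2),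
      ← intervalIntegral.integral_eq_integral_of_support_subset (a := x / 2) (b := x + 1)
        (f := fun y => φ y * ge y)
        ((Function.support_mul_subset_left _ _).trans s0)]
    have a1 : ∫ y in (x/2)..(x+1), deriv (deriv φ) y * Pe y
        = ∫ y in (x/2)..(x+1), deriv (deriv φ) y * P y := by
      apply intervalIntegral.integral_congr
      intro y hy
      rw [uIcc_of_le h12] at hy
      simp only [eP y hy]
    have a2 : ∫ y in (x/2)..(x+1), φ y * ge y = ∫ y in (x/2)..(x+1), φ y * g y := by
      apply intervalIntegral.integral_congr
      intro y hy
      rw [uIcc_of_le h12] at hy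
      simp only [eg y hy]
    rw [a1, a2, this]) x ⟨by linarith, by linarith⟩
  have hev : P =ᶠ[𝓝 x] Pe := by
    filter_upwards [Icc_mem_nhds (show x / 2 < x by linarith) (show x < x + 1 by linarith)]
      with y hy using (eP y hy).symm
  rw [hev.deriv_eq]
  refine ⟨key.1.congr_of_eventuallyEq hev, ?_⟩
  rw [← eg x ⟨by linarith, by linarith⟩]
  exact key.2.congr_of_eventuallyEq hev.deriv

/-- Initial potential. -/
def initPot (f : ℝ → ℝ) (r : ℝ) : ℝ := ∫ ρ in Ioi (0:ℝ), max (1 - r / ρ) 0 * f ρ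

theorem hasDerivAt_integral_Ioi {f : ℝ → ℝ} (hf : ContinuousOn f (Ioi 0))
    (hi : ∀ r, 0 < r → IntegrableOn f (Ioi r)) {r : ℝ} (hr : 0 < r) :
    HasDerivAt (fun x => ∫ ρ in Ioi x, f ρ) (- f r) r := by
  have hr2 : 0 < r / 2 := by positivity
  have h1 : HasDerivAt (fun x => (∫ ρ in Ioi (r/2), f ρ) - ∫ ρ in (r/2)..x, f ρ) (- f r) r := by
    refine HasDerivAt.const_sub _ ?_
    refine intervalIntegral.integral_hasDerivAt_right ?_ ?_ (hf.continuousAt (Ioi_mem_nhds hr))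
    · apply ContinuousOn.intervalIntegrable
      refine hf.mono fun y hy => ?_
      rw [uIcc_of_le (by linarith)] at hy
      exact lt_of_lt_of_le hr2 hy.1
    · exact hf.stronglyMeasurableAtFilter isOpen_Ioi r hr
  refine h1.congr_of_eventuallyEq ?_
  filter_upwards [Ioi_mem_nhds hr] with x hx
  have := intervalIntegral.integral_interval_add_Ioi (hi (r/2) hr2) (hi x hx)
  linarith

theorem initPot_eq {f : ℝ → ℝ} (hi : IntegrableOn f (Ioi 0))
    {r : ℝ} (hr : 0 < r) (hi2 : IntegrableOn (fun ρ => f ρ / ρ) (Ioi r)) :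
    initPot f r = (∫ ρ in Ioi r, f ρ) - r * ∫ ρ in Ioi r, f ρ / ρ := by
  have e1 : initPot f r = ∫ ρ in Ioi r, (1 - r / ρ) * f ρ := by
    unfold initPot
    rw [← integral_indicator measurableSet_Ioi, ← integral_indicator measurableSet_Ioi]
    congr 1
    ext ρ
    by_cases h1 : r < ρ
    · rw [indicator_of_mem (show ρ ∈ Ioi 0 from hr.trans h1), indicator_of_mem (show ρ ∈ Ioi r from h1),
        max_eq_left]
      have : r / ρ ≤ 1 := (div_le_one (hr.trans h1)).2 h1.le
      linarith
    · rw [indicator_of_notMem (show ρ ∉ Ioi r from h1)]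
      by_cases h2 : 0 < ρ
      · rw [indicator_of_mem (show ρ ∈ Ioi 0 from h2), max_eq_right, zero_mul]
        have : 1 ≤ r / ρ := (one_le_div h2).2 (not_lt.1 h1)
        linarith
      · rw [indicator_of_notMem (show ρ ∉ Ioi 0 from h2)]
  rw [e1, ← integral_const_mul, ← integral_sub (hi.mono_set (Ioi_subset_Ioi hr.le))
    (hi2.const_mul r)]
  congr 1
  ext ρ
  ring

theorem integrableOn_div {f : ℝ → ℝ} (hf : ContinuousOn f (Ioi 0))
    (hi : IntegrableOn f (Ioi 0)) {r : ℝ} (hr : 0 < r) :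
    IntegrableOn (fun ρ => f ρ / ρ) (Ioi r) := by
  have h1 := (hi.mono_set (Ioi_subset_Ioi hr.le)).const_mul r⁻¹
  refine Integrable.mono h1 ?_ ?_
  · refine ContinuousOn.aestronglyMeasurable ?_ measurableSet_Ioi
    exact (hf.mono (Ioi_subset_Ioi hr.le)).div continuousOn_id
      (fun x hx => (hr.trans hx).ne')
  · refine (ae_restrict_iff' measurableSet_Ioi).2 (Eventually.of_forall fun x hx => ?_)
    have hx : r < x := hx
    rw [norm_div, norm_mul, div_eq_inv_mul, norm_inv]
    refine mul_le_mul_of_nonneg_right ?_ (norm_nonneg _)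
    rw [Real.norm_of_nonneg hr.le, Real.norm_of_nonneg (hr.trans hx).le]
    exact inv_anti₀ hr hx.le

theorem initPot_deriv {f : ℝ → ℝ} (hf : ContinuousOn f (Ioi 0))
    (hi : IntegrableOn f (Ioi 0)) {r : ℝ} (hr : 0 < r) :
    HasDerivAt (initPot f) (- ∫ ρ in Ioi r, f ρ / ρ) r := by
  have hi2 := fun r (hr : 0 < r) => integrableOn_div hf hi hr
  have hfc : ContinuousOn (fun ρ => f ρ / ρ) (Ioi 0) :=
    hf.div continuousOn_id (fun x hx => ne_of_gt hx)
  have h1 := (hasDerivAt_integral_Ioi hf (fun r hr => hi.mono_set (Ioi_subset_Ioi hr.le)) hr).sub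
    ((hasDerivAt_id r).mul (hasDerivAt_integral_Ioi hfc hi2 hr))
  refine (h1.congr_of_eventuallyEq ?_).congr_deriv ?_
  · filter_upwards [Ioi_mem_nhds hr] with x hx
    exact initPot_eq hi hx (hi2 x hx)
  · simp only [id]
    field_simp
    ring

theorem initPot_nonneg {f : ℝ → ℝ} (h0 : ∀ ρ, 0 < ρ → 0 ≤ f ρ) (r : ℝ) : 0 ≤ initPot f r :=
  setIntegral_nonneg measurableSet_Ioi fun ρ hρ => mul_nonneg (le_max_right _ _) (h0 ρ hρ)

theorem initPot_aesm {f : ℝ → ℝ} (hf : ContinuousOn f (Ioi 0)) (r : ℝ) :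
    AEStronglyMeasurable (fun ρ => max (1 - r / ρ) 0 * f ρ) (volume.restrict (Ioi 0)) := by
  refine ContinuousOn.aestronglyMeasurable ?_ measurableSet_Ioi
  refine ContinuousOn.mul (ContinuousOn.sup ?_ continuousOn_const) hf
  exact continuousOn_const.sub (continuousOn_const.div continuousOn_id (fun x hx => ne_of_gt hx))

theorem initPot_bound {f : ℝ → ℝ} (h0 : ∀ ρ, 0 < ρ → 0 ≤ f ρ) {r : ℝ} (hr : 0 < r) :
    ∀ᵐ ρ ∂(volume.restrict (Ioi (0:ℝ))), ‖max (1 - r / ρ) 0 * f ρ‖ ≤ f ρ := by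
  refine (ae_restrict_iff' measurableSet_Ioi).2 (Eventually.of_forall fun x hx => ?_)
  have hx : 0 < x := hx
  rw [Real.norm_of_nonneg (mul_nonneg (le_max_right _ _) (h0 x hx))]
  have : 0 < r / x := by positivity
  exact mul_le_of_le_one_left (h0 x hx) (max_le (by linarith) zero_le_one)

theorem initPot_le {f : ℝ → ℝ} (hf : ContinuousOn f (Ioi 0))
    (hi : IntegrableOn f (Ioi 0)) (h0 : ∀ ρ, 0 < ρ → 0 ≤ f ρ) {r : ℝ} (hr : 0 < r) :
    initPot f r ≤ ∫ ρ in Ioi 0, f ρ := by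
  refine integral_mono_ae (Integrable.mono' hi (initPot_aesm hf r) (initPot_bound h0 hr)) hi ?_
  filter_upwards [initPot_bound h0 hr] with x hx
  exact (le_abs_self _).trans hx

theorem initPot_top {f : ℝ → ℝ} (hf : ContinuousOn f (Ioi 0))
    (hi : IntegrableOn f (Ioi 0)) (h0 : ∀ ρ, 0 < ρ → 0 ≤ f ρ) :
    Tendsto (fun s => initPot f (exp s)) atTop (𝓝 0) := by
  have : Tendsto (fun s => initPot f (exp s)) atTop (𝓝 (∫ ρ in Ioi (0:ℝ), (0:ℝ))) := by
    refine tendsto_integral_filter_of_dominated_convergence f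
      (Eventually.of_forall fun s => initPot_aesm hf _)
      (Eventually.of_forall fun s => initPot_bound h0 (exp_pos s)) hi ?_
    refine (ae_restrict_iff' measurableSet_Ioi).2 (Eventually.of_forall fun x hx => ?_)
    have hx : 0 < x := hx
    refine tendsto_const_nhds.congr' ?_
    filter_upwards [tendsto_exp_atTop.eventually_ge_atTop x] with s hs
    have : 1 ≤ exp s / x := (one_le_div hx).2 hs
    rw [max_eq_right (by linarith), zero_mul]
  simpa using this

theorem initPot_bot {f : ℝ → ℝ} (hf : ContinuousOn f (Ioi 0))
    (hi : IntegrableOn f (Ioi 0)) (h0 : ∀ ρ, 0 < ρ → 0 ≤ f ρ) :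
    Tendsto (fun s => initPot f (exp s)) atBot (𝓝 (∫ ρ in Ioi 0, f ρ)) := by
  refine tendsto_integral_filter_of_dominated_convergence f
    (Eventually.of_forall fun s => initPot_aesm hf _)
    (Eventually.of_forall fun s => initPot_bound h0 (exp_pos s)) hi ?_
  refine Eventually.of_forall fun x => ?_
  have h1 : Tendsto (fun s => max (1 - exp s / x) 0 * f x) atBot
      (𝓝 (max (1 - 0 / x) 0 * f x)) :=
    (((tendsto_const_nhds.sub (tendsto_exp_atBot.div_const x)).max tendsto_const_nhds)).mul_const _
  simpa using h1
/-- Time primitive. -/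
def timePot (w : ℝ → ℝ → ℝ) (r t : ℝ) : ℝ := ∫ τ in (0:ℝ)..t, w r τ

/-- Data of a nonnegative, continuous, locally bounded function. -/
structure IsGood (w : ℝ → ℝ → ℝ) : Prop where
  nonneg : ∀ r t, 0 ≤ w r t
  cont : ContinuousOn (fun p : ℝ × ℝ => w p.1 p.2) (Ici 0 ×ˢ Ioi 0)
  bdd : ∀ T : ℝ, 0 < T → ∃ C : ℝ, ∀ r ∈ Ici (0 : ℝ), ∀ t ∈ Icc (0 : ℝ) T, w r t ≤ C

namespace IsGood

variable {w : ℝ → ℝ → ℝ}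

theorem contAt (h : IsGood w) {r t : ℝ} (hr : 0 < r) (ht : 0 < t) :
    ContinuousAt (fun p : ℝ × ℝ => w p.1 p.2) (r, t) :=
  h.cont.continuousAt (prod_mem_nhds (Ici_mem_nhds hr) (Ioi_mem_nhds ht))

theorem cont_t (h : IsGood w) {r : ℝ} (hr : 0 < r) : ContinuousOn (fun τ => w r τ) (Ioi 0) :=
  fun t ht => ((h.contAt hr ht).comp (f := fun τ : ℝ => (r, τ)) (by fun_prop)).continuousWithinAt

theorem cont_r (h : IsGood w) {t : ℝ} (ht : 0 < t) : ContinuousOn (fun r => w r t) (Ioi 0) :=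
  fun r hr => ((h.contAt hr ht).comp (f := fun r : ℝ => (r, t)) (by fun_prop)).continuousWithinAt

theorem int_t (h : IsGood w) {r t : ℝ} (hr : 0 < r) (ht : 0 < t) :
    IntervalIntegrable (fun τ => w r τ) volume 0 t := by
  rw [intervalIntegrable_iff_integrableOn_Ioc_of_le ht.le]
  obtain ⟨C, hC⟩ := h.bdd t ht
  refine IntegrableOn.of_bound measure_Ioc_lt_top
    (((h.cont_t hr).mono Ioc_subset_Ioi_self).aestronglyMeasurable measurableSet_Ioc) C ?_
  refine (ae_restrict_iff' measurableSet_Ioc).2 (Eventually.of_forall fun τ hτ => ?_)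
  rw [Real.norm_of_nonneg (h.nonneg _ _)]
  exact hC r hr.le τ ⟨hτ.1.le, hτ.2⟩

theorem pot_nonneg (h : IsGood w) {r t : ℝ} (ht : 0 < t) : 0 ≤ timePot w r t :=
  intervalIntegral.integral_nonneg ht.le fun _ _ => h.nonneg _ _

theorem pot_le (h : IsGood w) {r t C : ℝ} (hr : 0 < r) (ht : 0 < t)
    (hC : ∀ τ ∈ Icc (0:ℝ) t, w r τ ≤ C) : timePot w r t ≤ C * t := by
  have := intervalIntegral.integral_mono_on ht.le (h.int_t hr ht)
    (intervalIntegrable_const (c := C)) hC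
  simp only [intervalIntegral.integral_const, smul_eq_mul, sub_zero] at this
  unfold timePot
  linarith

theorem pot_deriv (h : IsGood w) {r t : ℝ} (hr : 0 < r) (ht : 0 < t) :
    HasDerivAt (fun τ => timePot w r τ) (w r t) t :=
  intervalIntegral.integral_hasDerivAt_right (h.int_t hr ht)
    ((h.cont_t hr).stronglyMeasurableAtFilter isOpen_Ioi t ht)
    ((h.cont_t hr).continuousAt (Ioi_mem_nhds ht))

theorem pot_cont (h : IsGood w) {r t : ℝ} (hr : 0 < r) (ht : 0 < t) :
    ContinuousAt (fun p : ℝ × ℝ => timePot w p.1 p.2) (r, t) := by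
  have e : ∀ p : ℝ × ℝ, timePot w p.1 p.2 = p.2 * ∫ σ in (0:ℝ)..1, w p.1 (p.2 * σ) := by
    intro p
    rw [intervalIntegral.mul_integral_comp_mul_left (f := fun σ => w p.1 σ)]
    simp [timePot]
  simp only [e]
  refine continuousAt_snd.mul ?_
  obtain ⟨C, hC⟩ := h.bdd (2 * t) (by positivity)
  have hnear : ∀ᶠ p : ℝ × ℝ in 𝓝 (r, t), p ∈ Ioi (0:ℝ) ×ˢ Ioo 0 (2 * t) :=
    prod_mem_nhds (Ioi_mem_nhds hr) (Ioo_mem_nhds ht (by linarith))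
  refine intervalIntegral.continuousAt_of_dominated_interval (bound := fun _ => C) ?_ ?_
    intervalIntegrable_const ?_
  · filter_upwards [hnear] with p hp
    rw [uIoc_of_le zero_le_one]
    refine ContinuousOn.aestronglyMeasurable ?_ measurableSet_Ioc
    refine (h.cont_t hp.1).comp (f := fun σ => p.2 * σ) (by fun_prop) ?_
    intro σ hσ
    exact mul_pos hp.2.1 hσ.1
  · filter_upwards [hnear] with p hp
    refine Eventually.of_forall fun σ hσ => ?_
    rw [uIoc_of_le zero_le_one] at hσ
    rw [Real.norm_of_nonneg (h.nonneg _ _)]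
    refine hC _ (mem_Ici.2 (le_of_lt hp.1)) _ ⟨mul_nonneg hp.2.1.le hσ.1.le, ?_⟩
    exact (mul_le_of_le_one_right hp.2.1.le hσ.2).trans hp.2.2.le
  · refine Eventually.of_forall fun σ hσ => ?_
    rw [uIoc_of_le zero_le_one] at hσ
    exact ContinuousAt.comp (g := fun p : ℝ × ℝ => w p.1 p.2)
      (f := fun p : ℝ × ℝ => (p.1, p.2 * σ)) (h.contAt hr (mul_pos ht hσ.1)) (by fun_prop)

theorem fubini (h : IsGood w) {ψ : ℝ → ℝ} (hψ : Continuous ψ) {r₁ r₂ T : ℝ} (h1 : 0 < r₁)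
    (h12 : r₁ < r₂) (hT : 0 < T) :
    ∫ t in (0:ℝ)..T, ∫ r in r₁..r₂, ψ r * w r t = ∫ r in r₁..r₂, ψ r * timePot w r T := by
  rw [intervalIntegral_intervalIntegral_swap]
  · congr 1
    ext r
    rw [intervalIntegral.integral_const_mul]; rfl
  · rw [uIoc_of_le hT.le, uIoc_of_le h12.le]
    obtain ⟨C, hC⟩ := h.bdd T hT
    obtain ⟨D, hD⟩ := (isCompact_Icc (a := r₁) (b := r₂)).exists_bound_of_continuousOn
      hψ.continuousOn
    refine IntegrableOn.of_bound ?_ ?_ (D * C) ?_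
    · rw [Measure.volume_eq_prod, Measure.prod_prod]
      exact ENNReal.mul_lt_top measure_Ioc_lt_top measure_Ioc_lt_top
    · refine ContinuousOn.aestronglyMeasurable ?_ (measurableSet_Ioc.prod measurableSet_Ioc)
      rintro ⟨t, r⟩ ⟨ht, hr⟩
      refine ContinuousAt.continuousWithinAt ?_
      have hr0 : 0 < r := h1.trans hr.1
      refine ContinuousAt.mul (f := fun p : ℝ × ℝ => ψ p.2) (by fun_prop) ?_
      exact ContinuousAt.comp (g := fun p : ℝ × ℝ => w p.1 p.2)
        (f := fun p : ℝ × ℝ => (p.2, p.1)) (h.contAt hr0 ht.1) (by fun_prop)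
    · refine (ae_restrict_iff' (measurableSet_Ioc.prod measurableSet_Ioc)).2
        (Eventually.of_forall ?_)
      rintro ⟨t, r⟩ ⟨ht, hr⟩
      have hr0 : 0 < r := h1.trans hr.1
      simp only [Function.uncurry_apply_pair, norm_mul]
      have a1 := hD r ⟨hr.1.le, hr.2⟩
      refine mul_le_mul a1 ?_ (norm_nonneg _) ((norm_nonneg _).trans a1)
      rw [Real.norm_of_nonneg (h.nonneg _ _)]
      exact hC r hr0.le t ⟨ht.1.le, ht.2⟩

end IsGood

theorem isGood_pow {m : ℝ} (hm : 1 < m) {u : ℝ → ℝ → ℝ} {u₀ : ℝ → ℝ}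
    (hsol : IsRadialVeryWeakSolution 1 m u u₀) : IsGood (fun r t => u r t ^ m) := by
  refine ⟨fun r t => rpow_nonneg (hsol.1 r t) m, ?_, ?_⟩
  · exact hsol.2.1.rpow_const fun x _ => Or.inr (by linarith)
  · intro T hT
    obtain ⟨C, hC⟩ := hsol.2.2.1 T hT
    exact ⟨C ^ m, fun r hr t ht => rpow_le_rpow (hsol.1 r t) (hC r hr t ht) (by linarith)⟩

theorem isGood_self {m : ℝ} {u : ℝ → ℝ → ℝ} {u₀ : ℝ → ℝ}
    (hsol : IsRadialVeryWeakSolution 1 m u u₀) : IsGood u := ⟨hsol.1, hsol.2.1, hsol.2.2.1⟩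

theorem weak_pot {m : ℝ} (hm : 1 < m) {u : ℝ → ℝ → ℝ} {u₀ : ℝ → ℝ}
    (hsol : IsRadialVeryWeakSolution 1 m u u₀) {T : ℝ} (hT : 0 < T)
    (r₁ r₂ : ℝ) (φ : ℝ → ℝ) (h1 : 0 < r₁) (h12 : r₁ < r₂) (hφ : ContDiff ℝ 2 φ)
    (h0 : ∀ x, 0 ≤ φ x) (ht : tsupport φ ⊆ Ioo r₁ r₂) :
    ∫ x in r₁..r₂, deriv (deriv φ) x * timePot (fun r t => u r t ^ m) x T
      = ∫ x in r₁..r₂, φ x * ((u x T - u₀ x) / x ^ 2) := by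
  have hφ1 : ContDiff ℝ 1 (deriv φ) := by
    have : ContDiff ℝ (1 + 1) φ := by
      convert hφ using 1
      norm_num
    exact (contDiff_succ_iff_deriv.1 this).2.2
  have hdc : Continuous (deriv (deriv φ)) := hφ1.continuous_deriv (by norm_num)
  have n1 : r₁ ∉ tsupport φ := fun h => lt_irrefl _ (ht h).1
  have n2 : r₂ ∉ tsupport φ := fun h => lt_irrefl _ (ht h).2
  have := hsol.2.2.2 r₁ r₂ T (fun r _ => φ r) (fun _ _ => 0) (fun r _ => deriv φ r)
    (fun r _ => deriv (deriv φ) r) h1 h12 hT (fun r _ => h0 r) (fun r t => hasDerivAt_const _ _)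
    (fun r t => (hφ.differentiable (by norm_num) r).hasDerivAt)
    (fun r t => (hφ1.differentiable (by norm_num) r).hasDerivAt)
    (hφ.continuous.comp continuous_fst) continuous_const (hφ1.continuous.comp continuous_fst)
    (hdc.comp continuous_fst)
    (fun t _ => ⟨image_eq_zero_of_notMem_tsupport n1, image_eq_zero_of_notMem_tsupport n2⟩)
  simp only [Nat.cast_one, sub_self, zero_div, zero_mul, mul_zero, add_zero, zero_add, rpow_zero,
    mul_one, one_mul, deriv_of_notMem_tsupport n1, deriv_of_notMem_tsupport n2,
    intervalIntegral.integral_zero] at this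
  rw [← (isGood_pow hm hsol).fubini hdc h1 h12 hT, this]
  apply intervalIntegral.integral_congr
  intro r hr
  rw [uIcc_of_le h12.le] at hr
  have hr0 : 0 < r := lt_of_lt_of_le h1 hr.1
  have : r ^ (-2 : ℝ) = (r ^ 2)⁻¹ := by
    rw [rpow_neg hr0.le]; norm_num
  simp only [this]
  ring
theorem isPot_of_sol {m M : ℝ} (hm : 1 < m) {u : ℝ → ℝ → ℝ} {u₀ : ℝ → ℝ}
    (hsol : IsRadialVeryWeakSolution 1 m u u₀) (hu₀cont : Continuous u₀)
    (hu₀nonneg : ∀ x, 0 ≤ u₀ x) (hint : IntegrableOn (fun x => u₀ x / x) (Ioi 0))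
    (hM : M = ∫ x in Ioi (0 : ℝ), u₀ x / x) :
    IsPot m M (fun s t => u (exp s) t)
      (fun s t => timePot (fun r t => u r t ^ m) (exp s) t + initPot (fun x => u₀ x / x) (exp s))
      (fun s t => exp s * (deriv (fun r => timePot (fun r t => u r t ^ m) r t) (exp s)
        - ∫ ρ in Ioi (exp s), u₀ ρ / ρ / ρ))
      (fun s => initPot (fun x => u₀ x / x) (exp s)) := by
  have hw := isGood_pow hm hsol
  have hu := isGood_self hsol
  have hfc : ContinuousOn (fun x => u₀ x / x) (Ioi 0) :=
    hu₀cont.continuousOn.div continuousOn_id (fun x hx => ne_of_gt hx)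
  have hfc2 : ContinuousOn (fun x => u₀ x / x / x) (Ioi 0) :=
    hfc.div continuousOn_id (fun x hx => ne_of_gt hx)
  have hf0 : ∀ ρ, 0 < ρ → 0 ≤ u₀ ρ / ρ := fun ρ hρ => div_nonneg (hu₀nonneg ρ) hρ.le
  have hweyl : ∀ t, 0 < t → ∀ r, 0 < r →
      HasDerivAt (fun r => timePot (fun r t => u r t ^ m) r t)
        (deriv (fun r => timePot (fun r t => u r t ^ m) r t) r) r ∧
      HasDerivAt (deriv (fun r => timePot (fun r t => u r t ^ m) r t))
        ((u r t - u₀ r) / r ^ 2) r := by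
    intro t ht
    refine weyl1 (P := fun r => timePot (fun r t => u r t ^ m) r t)
      (g := fun r => (u r t - u₀ r) / r ^ 2) ?_ ?_ ?_
    · intro r hr
      exact (ContinuousAt.comp (g := fun p : ℝ × ℝ => timePot (fun r t => u r t ^ m) p.1 p.2)
        (f := fun r : ℝ => (r, t)) (hw.pot_cont hr ht) (by fun_prop)).continuousWithinAt
    · refine ((hu.cont_r ht).sub hu₀cont.continuousOn).div (by fun_prop) ?_
      intro x hx
      have : 0 < x := hx
      positivity
    · intro r₁ r₂ φ h1 h12 hφ h0 _ hts
      exact weak_pot hm hsol ht r₁ r₂ φ h1 h12 hφ h0 hts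
  refine
    { W_nonneg := fun s t => hsol.1 _ _
      W_bdd := ?_
      der_s := ?_
      der_ss := ?_
      der_t := ?_
      cont := ?_
      ge_start := ?_
      le_start := ?_
      Q0_nonneg := fun s => initPot_nonneg hf0 _
      Q0_le := ?_
      Q0_bot := ?_
      Q0_top := initPot_top hfc hint hf0 }
  · intro T hT
    obtain ⟨C, hC⟩ := hu.bdd T hT
    exact ⟨C, fun s t h1 h2 => hC _ (exp_pos s).le t ⟨h1.le, h2⟩⟩
  · intro s t ht
    have hr := exp_pos s
    have := ((hweyl t ht _ hr).1.add (initPot_deriv hfc hint hr)).comp s (Real.hasDerivAt_exp s)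
    exact this.congr_deriv (by ring)
  · intro s t ht
    have hr := exp_pos s
    have h2 := (hasDerivAt_integral_Ioi hfc2 (fun r hr => integrableOn_div hfc hint hr) hr)
    have h1 := ((hweyl t ht _ hr).2.sub h2).comp s (Real.hasDerivAt_exp s)
    refine ((Real.hasDerivAt_exp s).mul h1).congr_deriv ?_
    simp only [Function.comp, Pi.sub_apply]
    field_simp
    ring
  · intro s t ht
    exact (hw.pot_deriv (exp_pos s) ht).add_const _
  · rintro ⟨s, t⟩ ⟨-, ht⟩
    refine ContinuousAt.continuousWithinAt ?_
    refine ContinuousAt.add ?_ ?_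
    · exact ContinuousAt.comp (g := fun p : ℝ × ℝ => timePot (fun r t => u r t ^ m) p.1 p.2)
        (f := fun p : ℝ × ℝ => (exp p.1, p.2)) (hw.pot_cont (exp_pos s) ht) (by fun_prop)
    · exact ContinuousAt.comp (g := initPot (fun x => u₀ x / x))
        (f := fun p : ℝ × ℝ => exp p.1) (initPot_deriv hfc hint (exp_pos s)).continuousAt
        (by fun_prop)
  · intro s t ht
    have := hw.pot_nonneg (r := exp s) ht
    linarith
  · intro T hT
    obtain ⟨C, hC⟩ := hw.bdd T hT
    refine ⟨C, fun s t h1 h2 => ?_⟩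
    have := hw.pot_le (exp_pos s) h1 (C := C)
      (fun τ hτ => hC _ (exp_pos s).le τ ⟨hτ.1, hτ.2.trans h2⟩)
    linarith
  · intro s
    rw [hM]
    exact initPot_le hfc hint hf0 (exp_pos s)
  · rw [hM]
    exact initPot_bot hfc hint hf0

theorem cov_exp (g : ℝ → ℝ) {L : ℝ} (hL : 0 < L) :
    ∫ x, g |x| = 2 * ∫ y, L * exp (y * L) * g (exp (y * L)) := by
  rw [integral_comp_abs]
  congr 1
  have himg : (fun y => exp (y * L)) '' univ = Ioi 0 := by
    ext x
    simp only [image_univ, mem_range, mem_Ioi]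
    constructor
    · rintro ⟨y, rfl⟩; exact exp_pos _
    · intro hx
      exact ⟨log x / L, by rw [div_mul_cancel₀ _ hL.ne', exp_log hx]⟩
  rw [← himg, integral_image_eq_integral_abs_deriv_smul (f' := fun y => L * exp (y * L))
    MeasurableSet.univ]
  · rw [setIntegral_univ]
    congr 1
    ext y
    rw [abs_of_pos (by positivity), smul_eq_mul]
  · intro y _
    have := ((hasDerivAt_id y).mul_const L).exp
    exact (this.congr_deriv (by simp [mul_comm])).hasDerivWithinAt
  · intro a _ b _ hab
    have := exp_injective hab
    exact mul_right_cancel₀ hL.ne' this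

theorem k_relation {m k : ℝ} (hm : 1 < m) (hk : 0 < k) :
    (m - 1) * (k / m) ^ (1 / (m - 1) + 1)
      = ((m - 1) / m) * m ^ (-(1 / (m - 1))) * k ^ (m / (m - 1)) := by
  have hm0 : 0 < m := by linarith
  have hm1 : m - 1 ≠ 0 := by linarith
  have e : m / (m - 1) = 1 / (m - 1) + 1 := by field_simp; ring
  rw [e, div_rpow hk.le hm0.le, rpow_neg hm0.le, rpow_add_one hm0.ne']
  have : 0 < m ^ (1 / (m - 1)) := rpow_pos_of_pos hm0 _
  field_simp

theorem F_exp {m k t : ℝ} (hm : 1 < m) (ht : 0 < t) (y : ℝ) :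
    (if |exp (y * t ^ (1 / m))| < Real.exp (k * t ^ (1 / m)) then
        t ^ (-(1 / m)) * (max ((1 / m) * t ^ (-(1 / m)) *
          Real.log |exp (y * t ^ (1 / m))|) 0) ^ (1 / (m - 1))
      else 0) = (t ^ (1 / m))⁻¹ * limg m k y := by
  have hL : 0 < t ^ (1 / m) := rpow_pos_of_pos ht _
  rw [abs_of_pos (exp_pos _), log_exp, rpow_neg ht.le]
  unfold limg
  have e : 1 / m * (t ^ (1 / m))⁻¹ * (y * t ^ (1 / m)) = y / m := by
    field_simp
  simp only [exp_lt_exp, mul_lt_mul_iff_left₀ hL, e]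
  split_ifs <;> simp

theorem integral_formula {m k t p : ℝ} (hm : 1 < m) (ht : 0 < t) (hp : 1 ≤ p)
    {u F : ℝ → ℝ → ℝ} (heven : ∀ x t, u (-x) t = u x t)
    (hF : ∀ x t, F x t =
      if |x| < Real.exp (k * t ^ (1 / m)) then
        t ^ (-(1 / m)) * (max ((1 / m) * t ^ (-(1 / m)) * Real.log |x|) 0) ^ (1 / (m - 1))
      else 0) :
    ∫ x : ℝ, |u x t - F x t| ^ p / |x| = (t ^ (1 / m)) ^ (1 - p) *
      (2 * ∫ y, |t ^ (1 / m) * u (exp (y * t ^ (1 / m))) t - limg m k y| ^ p) := by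
  set L := t ^ (1 / m) with hLdef
  have hL : 0 < L := rpow_pos_of_pos ht _
  have hue : ∀ x, u |x| t = u x t := by
    intro x
    rcases abs_choice x with h | h <;> rw [h]
    exact heven x t
  have hFe : ∀ x, F |x| t = F x t := by
    intro x; rw [hF, hF x t, abs_abs]
  have e1 : ∀ x : ℝ, |u x t - F x t| ^ p / |x|
      = (fun z => |u z t - F z t| ^ p / z) |x| := by
    intro x
    simp only [hue, hFe]
  simp only [e1]
  rw [cov_exp (fun z => |u z t - F z t| ^ p / z) hL]
  rw [mul_left_comm]
  congr 1
  rw [← integral_const_mul]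
  congr 1
  ext y
  have hFy : F (exp (y * L)) t = L⁻¹ * limg m k y := by
    rw [hF]; exact F_exp hm ht y
  have hE := exp_pos (y * L)
  have e2 : u (exp (y * L)) t - F (exp (y * L)) t
      = L⁻¹ * (L * u (exp (y * L)) t - limg m k y) := by
    rw [hFy]; field_simp
  simp only [e2]
  rw [abs_mul, mul_rpow (abs_nonneg _) (abs_nonneg _), abs_of_pos (inv_pos.2 hL),
    inv_rpow hL.le, rpow_sub hL, rpow_one]
  field_simp

theorem final_aux {m k p : ℝ} (hm : 1 < m) (hp : 1 ≤ p)
    {u F : ℝ → ℝ → ℝ} (heven : ∀ x t, u (-x) t = u x t)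
    (hF : ∀ x t, F x t =
      if |x| < Real.exp (k * t ^ (1 / m)) then
        t ^ (-(1 / m)) * (max ((1 / m) * t ^ (-(1 / m)) * Real.log |x|) 0) ^ (1 / (m - 1))
      else 0)
    (hlim : Tendsto (fun t : ℝ => ∫ y, |t ^ (1 / m) * u (exp (y * t ^ (1 / m))) t
      - limg m k y| ^ p) atTop (𝓝 0)) :
    Tendsto (fun t : ℝ =>
          t ^ ((p - 1) / (m * p)) * (∫ x : ℝ, |u x t - F x t| ^ p / |x|) ^ (1 / p))
        atTop (𝓝 0) := by
  have hp0 : 0 < p := by linarith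
  have h1 := (hlim.const_mul 2).rpow_const (p := 1 / p) (Or.inr (by positivity))
  rw [mul_zero, zero_rpow (by positivity)] at h1
  refine h1.congr' ?_
  filter_upwards [eventually_gt_atTop 0] with t ht
  have hL : 0 < t ^ (1 / m) := rpow_pos_of_pos ht _
  rw [integral_formula hm ht hp heven hF, mul_rpow (rpow_nonneg hL.le _)
    (mul_nonneg zero_le_two (integral_nonneg fun y => rpow_nonneg (abs_nonneg _) _)),
    ← mul_assoc, ← rpow_mul hL.le, ← rpow_mul ht.le, ← rpow_add ht]
  have : (p - 1) / (m * p) + 1 / m * ((1 - p) * (1 / p)) = 0 := by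
    field_simp
    ring
  rw [this, rpow_zero, one_mul]

/-- **Theorem 1.3(a) (N = 1, `u₀(0) = 0`).** Let `m > 1` and let `u` be an even (radially
symmetric) very weak solution of `|x|^{-2} ∂ₜ u = ∂ₓₓ(u^m)` on `ℝ × (0,∞)` with even
initial datum `u₀ ∈ L^∞ ∩ C`, `u₀ ≥ 0`, `u₀ ≢ 0`, `u₀(0) = 0` and
`M₀ = ∫₀^∞ u₀(x)/x dx < ∞`.  With `k > 0` determined by
`((m-1)/m) m^{-1/(m-1)} k^{m/(m-1)} = M₀` and the profile
`F(x,t) = t^{-1/m} [(1/m) t^{-1/m} log|x|]₊^{1/(m-1)}` for `0 < |x| < e^{k t^{1/m}}`,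
`F(x,t) = 0` otherwise, one has for every `p ∈ [1,∞)`:
`t^{(p-1)/(mp)} ‖u(·,t) - F(·,t)‖_{p,1} → 0` as `t → ∞`, where
`‖h‖_{p,1} = (∫_ℝ |h(x)|^p/|x| dx)^{1/p}`. -/
theorem asymptotics_N1_zero_data_Lp
    (m M₀ k : ℝ) (hm : 1 < m) (u : ℝ → ℝ → ℝ) (u₀ : ℝ → ℝ)
    (hsol : IsRadialVeryWeakSolution 1 m u u₀)
    (heven : ∀ x t, u (-x) t = u x t)
    (heven₀ : ∀ x, u₀ (-x) = u₀ x)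
    (hu₀cont : Continuous u₀)
    (hu₀bdd : ∃ C : ℝ, ∀ x, u₀ x ≤ C)
    (hu₀nonneg : ∀ x, 0 ≤ u₀ x)
    (hu₀ne : ∃ x, u₀ x ≠ 0)
    (hu₀zero : u₀ 0 = 0)
    (hint : IntegrableOn (fun x => u₀ x / x) (Ioi 0))
    (hM₀ : M₀ = ∫ x in Ioi (0 : ℝ), u₀ x / x)
    (hkpos : 0 < k)
    (hk : ((m - 1) / m) * m ^ (-(1 / (m - 1))) * k ^ (m / (m - 1)) = M₀)
    (F : ℝ → ℝ → ℝ)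
    (hF : ∀ x t, F x t =
      if |x| < Real.exp (k * t ^ (1 / m)) then
        t ^ (-(1 / m)) * (max ((1 / m) * t ^ (-(1 / m)) * Real.log |x|) 0) ^ (1 / (m - 1))
      else 0) :
    ∀ p : ℝ, 1 ≤ p →
      Tendsto (fun t : ℝ =>
          t ^ ((p - 1) / (m * p)) * (∫ x : ℝ, |u x t - F x t| ^ p / |x|) ^ (1 / p))
        atTop (𝓝 0) := by
  intro p hp
  have hpot := isPot_of_sol hm hsol hu₀cont hu₀nonneg hint hM₀
  refine final_aux hm hp heven hF ?_
  refine hpot.tendsto_Lp hm hkpos ((k_relation hm hkpos).trans hk) ?_ hp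
  intro t ht
  refine continuous_iff_continuousAt.2 fun s => ?_
  exact ContinuousAt.comp (g := fun p : ℝ × ℝ => u p.1 p.2) (f := fun s : ℝ => (exp s, t))
    ((isGood_self hsol).contAt (exp_pos s) ht) (by fun_prop)
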